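/- arXiv:math/9808107 — 5 statements merged into one kernel-verified Lean document; each statement's English description precedes it below -/
import Mathlib

section
/- For all positive integers m and n and all elements x_1, …, x_n of a commutative ring, the following identity holds: ∑_{λ ⊆ {m^n}} det((x_i^{λ_j + n − j})_{1≤i,j≤n}) · ∏_{i=1}^n (1 − x_i) · ∏_{1 ≤ i < j ≤ n} (x_i x_j − 1) = det((x_i^{j−1} − x_i^{m+2n−j})_{1≤i,j≤n}), where the sum is over all partitions λ = (λ_1 ≥ λ_2 ≥ ⋯ ≥ λ_n ≥ 0) with at most n parts, each part at most m. (This is Macdonald's identity ∑_{λ ⊆ {m^n}} s_λ(x_1,…,x_n) = det(x_i^{j−1} − x_i^{m+2n−j}) / (∏_i (1−x_i) ∏_{i<j} (x_i x_j − 1)(x_i − x_j)) with the denominators cleared using the bialternant formula for Schur functions.) -/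
open Polynomial in
/-- Replacing the columns `z ^ 0, …, z ^ n` of a Vandermonde matrix by `z ^ 1, …, z ^ n, g(z)`
multiplies its determinant by `(-1) ^ n * g(0)`. -/
theorem det_shifted_vandermonde_eval {R : Type*} [CommRing R] {n : ℕ} (z : Fin (n + 1) → R)
    (g : R[X]) (hg : g.natDegree < n + 1) :
    (Matrix.of fun i j : Fin (n + 1) =>
      if j = Fin.last n then g.eval (z i) else z i ^ ((j : ℕ) + 1)).det =
      (-1) ^ n * g.coeff 0 * (Matrix.vandermonde z).det := by
  set C : Matrix (Fin (n + 1)) (Fin (n + 1)) R := Matrix.of fun k j =>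
    if j = Fin.last n then g.coeff k else if (k : ℕ) = j + 1 then 1 else 0 with hC
  have hmul : (Matrix.of fun i j : Fin (n + 1) =>
      if j = Fin.last n then g.eval (z i) else z i ^ ((j : ℕ) + 1)) =
      Matrix.vandermonde z * C := by
    ext i j
    rw [Matrix.mul_apply]
    simp only [hC, Matrix.of_apply, Matrix.vandermonde_apply]
    split_ifs with h
    · rw [eval_eq_sum_range' hg, Finset.sum_range]
      exact Finset.sum_congr rfl fun k _ => mul_comm _ _
    · have hj : (j : ℕ) + 1 < n + 1 := by
        have := Fin.val_lt_last h
        simpa using this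
      rw [Finset.sum_eq_single (⟨j + 1, hj⟩ : Fin (n + 1))]
      · simp
      · intro b _ hb
        rw [if_neg, mul_zero]
        exact fun h' => hb (Fin.ext h')
      · simp
  have hdet : C.det = (-1) ^ n * g.coeff 0 := by
    rw [Matrix.det_succ_row_zero, Finset.sum_eq_single (Fin.last n)]
    · have : C.submatrix Fin.succ (Fin.last n).succAbove = 1 := by
        ext a b
        simp [hC, Matrix.one_apply, Fin.ext_iff, (Fin.is_lt b).ne]
      rw [this]
      simp [hC]
    · intro b _ hb
      simp [hC, hb]
    · simp
  rw [hmul, Matrix.det_mul, hdet, mul_comm]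

open Polynomial in
/-- The interpolation polynomial behind the column expansion of `det_sub_det_eq_sum`. -/
theorem exists_interpolation {K : Type*} [Field K] {n : ℕ} (x : Fin (n + 1) → K)
    (hx : ∀ i, x i ≠ 0) (hx' : ∀ i, 1 + x i ≠ 0) (s : Finset (Fin (n + 1))) :
    ∃ g : K[X], g.natDegree < n + 1 ∧ g.coeff 0 = (-1) ^ n * (1 - ∏ i ∈ s, x i) ∧
      (∀ i ∈ s, g.eval (x i) = (1 - x i) * ∏ k : Fin n, (x i * x (i.succAbove k) - 1)) ∧
      ∀ i ∉ s, g.eval (x i)⁻¹ = 0 := by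
  set G : K[X] := (∏ k ∈ sᶜ, (C (x k) * X - 1)) *
    (∏ k ∈ s, (X - C (x k)) - ∏ k ∈ s, (C (x k) * X - 1)) with hG
  have hlin : ∀ k, (C (x k) * X - 1 : K[X]).natDegree ≤ 1 := fun k => by compute_degree
  have hprod : ∀ t : Finset (Fin (n + 1)),
      (∏ k ∈ t, (C (x k) * X - 1 : K[X])).natDegree ≤ t.card := fun t =>
    (natDegree_prod_le _ _).trans ((Finset.sum_le_card_nsmul _ _ 1 fun k _ => hlin k).trans
      (by simp))
  have hGdeg : G.natDegree ≤ n + 1 := by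
    have h₁ : (∏ k ∈ s, (X - C (x k))).natDegree ≤ s.card := by
      simp [natDegree_prod_of_monic _ _ fun k _ => monic_X_sub_C (x k)]
    have h₂ := natDegree_mul_le_of_le (hprod sᶜ)
      ((natDegree_sub_le_of_le h₁ (hprod s)).trans (max_self _).le)
    rw [Finset.card_compl_add_card] at h₂
    simpa using h₂
  have hroot : G.IsRoot (-1) := by
    have : ∏ k ∈ s, (-1 - x k) = ∏ k ∈ s, (x k * -1 - 1) :=
      Finset.prod_congr rfl fun k _ => by ring
    simp [hG, eval_prod, IsRoot.def, this]
  obtain ⟨g, hg⟩ := dvd_iff_isRoot.2 hroot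
  have hev : ∀ a, G.eval a = (1 + a) * g.eval a := fun a => by
    rw [hg, eval_mul, eval_sub, eval_X, eval_C]; ring
  refine ⟨g, ?_, ?_, ?_, ?_⟩
  · by_cases h0 : g = 0
    · simp [h0]
    · rw [hg, natDegree_mul (X_sub_C_ne_zero _) h0, natDegree_X_sub_C] at hGdeg
      omega
  · have h := hev 0
    rw [add_zero, one_mul] at h
    rw [coeff_zero_eq_eval_zero, ← h]
    have hpow : (-1 : K) ^ sᶜ.card * (-1) ^ s.card = (-1) ^ (n + 1) := by
      rw [← pow_add, Finset.card_compl_add_card, Fintype.card_fin]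
    simp only [hG, eval_mul, eval_sub, eval_prod, eval_X, eval_C, eval_one, mul_zero, zero_sub,
      Finset.prod_const, Finset.prod_neg]
    linear_combination (∏ i ∈ s, x i - 1) * hpow
  · intro i hi
    apply mul_left_cancel₀ (hx' i)
    rw [← hev]
    have h0 : ∏ k ∈ s, (x i - x k) = 0 := Finset.prod_eq_zero hi (sub_self _)
    have h1 : (∏ k ∈ sᶜ, (x k * x i - 1)) * ∏ k ∈ s, (x k * x i - 1) =
        (x i * x i - 1) * ∏ k : Fin n, (x i * x (i.succAbove k) - 1) := by
      rw [Finset.prod_compl_mul_prod, Fin.prod_univ_succAbove _ i]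
      simp only [mul_comm]
    simp only [hG, eval_mul, eval_sub, eval_prod, eval_X, eval_C, eval_one, h0]
    linear_combination -h1
  · intro i hi
    have h1 : 1 + (x i)⁻¹ ≠ 0 := by
      intro h
      apply hx' i
      have := congrArg (x i * ·) h
      simpa [mul_add, hx i, add_comm] using this
    have h0 : ∏ k ∈ sᶜ, (x k * (x i)⁻¹ - 1) = 0 :=
      Finset.prod_eq_zero (Finset.mem_compl.2 hi) (by simp [hx i])
    have h := hev (x i)⁻¹
    simp only [hG, eval_mul, eval_sub, eval_prod, eval_X, eval_C, eval_one, h0, zero_mul] at h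
    exact (mul_eq_zero.1 h.symm).resolve_left h1

/-- The determinantal recursion satisfied by the right-hand side of Macdonald's identity, with
the powers `x i ^ (m + 2 * n - 1)` replaced by free parameters `T i`. -/
theorem det_sub_det_eq_sum {K : Type*} [Field K] {n : ℕ} (x T : Fin (n + 1) → K)
    (hx : ∀ i, x i ≠ 0) (hx' : ∀ i, 1 + x i ≠ 0) :
    (Matrix.of fun i j : Fin (n + 1) => x i ^ (j : ℕ) - T i * (x i)⁻¹ ^ (j : ℕ)).det -
      (Matrix.of fun i j : Fin (n + 1) => x i ^ ((j : ℕ) + 1) - T i * (x i)⁻¹ ^ (j : ℕ)).det =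
    ∑ i : Fin (n + 1), (-1) ^ ((i : ℕ) + n) *
      ((1 - x i) * ∏ k : Fin n, (x i * x (i.succAbove k) - 1)) *
      (Matrix.of fun k j : Fin n => x (i.succAbove k) ^ ((j : ℕ) + 1) -
        T (i.succAbove k) * (x (i.succAbove k))⁻¹ ^ ((j : ℕ) + 1)).det := by
  set w : Fin (n + 1) → K := fun i => (1 - x i) * ∏ k : Fin n, (x i * x (i.succAbove k) - 1)
    with hw
  have hsum : ∑ i : Fin (n + 1), (-1) ^ ((i : ℕ) + n) * w i *
      (Matrix.of fun k j : Fin n => x (i.succAbove k) ^ ((j : ℕ) + 1) -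
        T (i.succAbove k) * (x (i.succAbove k))⁻¹ ^ ((j : ℕ) + 1)).det =
      (Matrix.of fun i j : Fin (n + 1) => if j = Fin.last n then w i else
        x i ^ ((j : ℕ) + 1) - T i * (x i)⁻¹ ^ ((j : ℕ) + 1)).det := by
    rw [Matrix.det_succ_column _ (Fin.last n)]
    refine Finset.sum_congr rfl fun i _ => ?_
    congr 1
    · simp
    · congr 1
      ext k j
      simp [Fin.ext_iff, (Fin.is_lt j).ne]
  have hexp : ∀ P Q : Matrix (Fin (n + 1)) (Fin (n + 1)) K,
      (P + Q).det = ∑ s : Finset (Fin (n + 1)), Matrix.det (s.piecewise P Q) := fun P Q =>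
    (Matrix.detRowAlternating (n := Fin (n + 1)) (R := K)).toMultilinearMap.map_add_univ P Q
  have e₁ : (Matrix.of fun i j : Fin (n + 1) => x i ^ (j : ℕ) - T i * (x i)⁻¹ ^ (j : ℕ)) =
      (Matrix.of fun i j : Fin (n + 1) => x i ^ (j : ℕ)) +
      Matrix.of fun i j : Fin (n + 1) => -T i * (x i)⁻¹ ^ (j : ℕ) := by
    ext i j; simp [sub_eq_add_neg]
  have e₂ : (Matrix.of fun i j : Fin (n + 1) => x i ^ ((j : ℕ) + 1) - T i * (x i)⁻¹ ^ (j : ℕ)) =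
      (Matrix.of fun i j : Fin (n + 1) => x i ^ ((j : ℕ) + 1)) +
      Matrix.of fun i j : Fin (n + 1) => -T i * (x i)⁻¹ ^ (j : ℕ) := by
    ext i j; simp [sub_eq_add_neg]
  have e₃ : (Matrix.of fun i j : Fin (n + 1) => if j = Fin.last n then w i else
        x i ^ ((j : ℕ) + 1) - T i * (x i)⁻¹ ^ ((j : ℕ) + 1)) =
      (Matrix.of fun i j : Fin (n + 1) => if j = Fin.last n then w i else x i ^ ((j : ℕ) + 1)) +
      Matrix.of fun i j : Fin (n + 1) =>
        if j = Fin.last n then 0 else -T i * (x i)⁻¹ ^ ((j : ℕ) + 1) := by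
    ext i j
    simp only [Matrix.of_apply, Matrix.add_apply]
    split_ifs <;> ring
  rw [hsum, e₁, e₂, e₃, hexp, hexp, hexp, ← Finset.sum_sub_distrib]
  refine Finset.sum_congr rfl fun s _ => ?_
  obtain ⟨g, hdeg, hg0, hgs, hgs'⟩ := exists_interpolation x hx hx' s
  set z : Fin (n + 1) → K := fun i => if i ∈ s then x i else (x i)⁻¹ with hz
  set a : Fin (n + 1) → K := fun i => if i ∈ s then 1 else -T i with ha
  set c : Fin (n + 1) → K := fun i => if i ∈ s then x i else 1 with hc
  have f₁ : s.piecewise (Matrix.of fun i j : Fin (n + 1) => x i ^ (j : ℕ))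
      (Matrix.of fun i j : Fin (n + 1) => -T i * (x i)⁻¹ ^ (j : ℕ)) =
      Matrix.of fun i j => a i * Matrix.vandermonde z i j := by
    ext i j
    by_cases h : i ∈ s <;> simp [Finset.piecewise, h, ha, hz, Matrix.vandermonde_apply]
  have f₂ : s.piecewise (Matrix.of fun i j : Fin (n + 1) => x i ^ ((j : ℕ) + 1))
      (Matrix.of fun i j : Fin (n + 1) => -T i * (x i)⁻¹ ^ (j : ℕ)) =
      Matrix.of fun i j => (a i * c i) * Matrix.vandermonde z i j := by
    ext i j
    by_cases h : i ∈ s <;> simp [Finset.piecewise, h, ha, hz, hc, Matrix.vandermonde_apply]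
    ring
  have f₃ : s.piecewise
      (Matrix.of fun i j : Fin (n + 1) => if j = Fin.last n then w i else x i ^ ((j : ℕ) + 1))
      (Matrix.of fun i j : Fin (n + 1) =>
        if j = Fin.last n then 0 else -T i * (x i)⁻¹ ^ ((j : ℕ) + 1)) =
      Matrix.of fun i j => a i * (Matrix.of fun i j : Fin (n + 1) =>
        if j = Fin.last n then g.eval (z i) else z i ^ ((j : ℕ) + 1)) i j := by
    ext i j
    by_cases h : i ∈ s
    · simp [Finset.piecewise, h, ha, hz, hgs i h, hw]
    · simp [Finset.piecewise, h, ha, hz, hgs' i h]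
  have hcs : ∏ i, c i = ∏ i ∈ s, x i := by simp [hc, Finset.prod_ite_mem]
  have hsign : ((-1 : K) ^ n) * (-1) ^ n = 1 := by rw [← mul_pow]; simp
  rw [f₁, f₂, f₃, Matrix.det_mul_column, Matrix.det_mul_column, Matrix.det_mul_column,
    det_shifted_vandermonde_eval z g hdeg, hg0, Finset.prod_mul_distrib, hcs]
  linear_combination (-(∏ i, a i) * (1 - ∏ i ∈ s, x i) * (Matrix.vandermonde z).det) * hsign

/-- The sum of the alternants `det (x i ^ (l j + n - 1 - j))` over the partitions `l` with at most
`n` parts, all of them smaller than `M`. -/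
def boundedAlternantSum {R : Type*} [CommRing R] {n : ℕ} (M : ℕ) (x : Fin n → R) : R :=
  ∑ l ∈ Finset.univ.filter
      (fun l : Fin n → Fin M => ∀ i j : Fin n, i ≤ j → (l j : ℕ) ≤ (l i : ℕ)),
    Matrix.det (Matrix.of fun i j : Fin n => x i ^ ((l j : ℕ) + (n - 1 - (j : ℕ))))

/-- The denominator `∏ (1 - x i) * ∏ (x i * x j - 1)` of Macdonald's identity. -/
def macdonaldDenominator {R : Type*} [CommRing R] {n : ℕ} (x : Fin n → R) : R :=
  (∏ i : Fin n, (1 - x i)) * ∏ i : Fin n, ∏ j ∈ Finset.Ioi i, (x i * x j - 1)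

/-- The numerator `det (x i ^ j - x i ^ (M + 2 * n - 2 - j))` of Macdonald's identity. -/
def macdonaldNumerator {R : Type*} [CommRing R] {n : ℕ} (M : ℕ) (x : Fin n → R) : R :=
  Matrix.det (Matrix.of fun i j : Fin n => x i ^ (j : ℕ) - x i ^ (M + 2 * n - 2 - (j : ℕ)))

theorem prod_Ioi_succAbove {R : Type*} [CommMonoid R] {n : ℕ} (f : Fin (n + 1) → Fin (n + 1) → R)
    (hf : ∀ i j, f i j = f j i) (p : Fin (n + 1)) :
    ∏ i, ∏ j ∈ Finset.Ioi i, f i j =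
      (∏ k : Fin n, f p (p.succAbove k)) *
        ∏ i : Fin n, ∏ j ∈ Finset.Ioi i, f (p.succAbove i) (p.succAbove j) := by
  have hIoi : ∀ (N : ℕ) (h : Fin N → Fin N → R),
      ∏ i, ∏ j ∈ Finset.Ioi i, h i j = ∏ i, ∏ j, if i < j then h i j else 1 := fun N h =>
    Finset.prod_congr rfl fun i _ => by
      rw [← Finset.prod_filter]
      congr 1
      ext j
      simp
  rw [hIoi, hIoi, Fin.prod_univ_succAbove _ p, Fin.prod_univ_succAbove _ p]
  simp only [lt_irrefl, if_false, one_mul]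
  simp_rw [Fin.prod_univ_succAbove _ p, Fin.succAbove_lt_succAbove_iff]
  rw [Finset.prod_mul_distrib, ← mul_assoc, ← Finset.prod_mul_distrib]
  congr 1
  refine Finset.prod_congr rfl fun k _ => ?_
  rcases lt_or_gt_of_ne (Fin.succAbove_ne p k) with h | h
  · simp [h, h.not_gt, hf p]
  · simp [h, h.not_gt]

theorem macdonaldDenominator_succAbove {R : Type*} [CommRing R] {n : ℕ} (x : Fin (n + 1) → R)
    (p : Fin (n + 1)) :
    macdonaldDenominator x = ((1 - x p) * ∏ k : Fin n, (x p * x (p.succAbove k) - 1)) *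
      macdonaldDenominator fun k => x (p.succAbove k) := by
  unfold macdonaldDenominator
  rw [prod_Ioi_succAbove _ (fun i j => by rw [mul_comm]) p, Fin.prod_univ_succAbove _ p]
  ring

/-- Splitting the sum according to whether the last part vanishes. -/
theorem boundedAlternantSum_succ {R : Type*} [CommRing R] {n : ℕ} (M : ℕ)
    (x : Fin (n + 1) → R) :
    boundedAlternantSum (M + 1) x = (∏ i, x i) * boundedAlternantSum M x +
      ∑ i : Fin (n + 1), (-1) ^ ((i : ℕ) + n) * ((∏ k : Fin n, x (i.succAbove k)) *
        boundedAlternantSum (M + 1) fun k => x (i.succAbove k)) := by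
  unfold boundedAlternantSum
  rw [← Finset.sum_filter_not_add_sum_filter _ (fun l => l (Fin.last n) = 0)]
  congr 1
  · rw [Finset.mul_sum]
    symm
    refine Finset.sum_nbij (fun l j => (l j).succ) ?_ ?_ ?_ ?_
    · intro l hl
      simpa using hl
    · intro l _ l' _ h
      funext j
      exact Fin.succ_injective _ (congrFun h j)
    · intro l hl
      simp only [Finset.coe_filter, Finset.mem_filter, Finset.mem_univ, true_and,
        Set.mem_ofPred_eq] at hl
      have hne : ∀ j, l j ≠ 0 := fun j h => by
        have := hl.1 j (Fin.last n) (Fin.le_last j)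
        rw [h] at this
        exact hl.2 (Fin.ext (by simpa using this))
      refine ⟨fun j => (l j).pred (hne j), ?_, ?_⟩
      · simp only [Finset.coe_filter, Finset.mem_univ, true_and, Set.mem_ofPred_eq, Fin.val_pred]
        exact fun i j hij => Nat.sub_le_sub_right (hl.1 i j hij) 1
      · funext j
        simp
    · intro l _
      rw [← Matrix.det_mul_column]
      congr 1
      ext i j
      simp only [Matrix.of_apply, Fin.val_succ]
      ring
  · simp_rw [Finset.mul_sum]
    rw [Finset.sum_comm]
    symm
    refine Finset.sum_nbij (fun l => Fin.snoc (α := fun _ => Fin (M + 1)) l 0) ?_ ?_ ?_ ?_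
    · intro l hl
      simp only [Finset.mem_filter, Finset.mem_univ, true_and, Fin.snoc_last, and_true] at hl ⊢
      intro i j
      induction j using Fin.lastCases with
      | last => simp
      | cast j =>
        induction i using Fin.lastCases with
        | last => exact fun h => absurd h (not_le.2 (Fin.castSucc_lt_last j))
        | cast i => simpa using hl i j
    · intro l _ l' _ h
      have := congrArg (Fin.init (α := fun _ => Fin (M + 1))) h
      simpa using this
    · intro l hl
      simp only [Finset.coe_filter, Finset.mem_filter, Finset.mem_univ, true_and,
        Set.mem_ofPred_eq] at hl
      refine ⟨Fin.init l, ?_, ?_⟩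
      · simp only [Finset.coe_filter, Finset.mem_univ, true_and, Set.mem_ofPred_eq, Fin.init]
        exact fun i j hij => hl.1 _ _ (by simpa using hij)
      · have := Fin.snoc_init_self l
        rwa [hl.2] at this
    · intro l _
      rw [Matrix.det_succ_column _ (Fin.last n)]
      refine Finset.sum_congr rfl fun i _ => ?_
      rw [← Matrix.det_mul_column, mul_assoc]
      simp only [Matrix.of_apply, Fin.snoc_last, Fin.val_last, Fin.val_zero, add_tsub_cancel_right,
        tsub_self, add_zero, pow_zero, one_mul]
      congr 2
      ext k j
      have hj := j.is_lt
      simp only [Matrix.of_apply, Matrix.submatrix_apply, Fin.succAbove_last, Fin.snoc_castSucc,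
        Fin.val_castSucc]
      rw [← pow_succ']
      congr 1
      omega

theorem macdonaldNumerator_succ {K : Type*} [Field K] {n : ℕ} (M : ℕ) (x : Fin (n + 1) → K)
    (hx : ∀ i, x i ≠ 0) (hx' : ∀ i, 1 + x i ≠ 0) :
    macdonaldNumerator (M + 1) x = (∏ i, x i) * macdonaldNumerator M x +
      ∑ i : Fin (n + 1), (-1) ^ ((i : ℕ) + n) *
        ((1 - x i) * ∏ k : Fin n, (x i * x (i.succAbove k) - 1)) *
        ((∏ k : Fin n, x (i.succAbove k)) *
          macdonaldNumerator (M + 1) fun k => x (i.succAbove k)) := by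
  have hpow : ∀ i (a b : ℕ), b ≤ a → x i ^ a * (x i)⁻¹ ^ b = x i ^ (a - b) := fun i a b h => by
    rw [pow_sub₀ _ (hx i) h, inv_pow]
  have key := det_sub_det_eq_sum x (fun i => x i ^ (M + 1 + 2 * n)) hx hx'
  rw [sub_eq_iff_eq_add'] at key
  convert key using 2
  · unfold macdonaldNumerator
    congr 1
    ext i j
    have hj := j.is_lt
    simp only [Matrix.of_apply]
    rw [hpow i _ _ (by omega)]
    congr 2
  · unfold macdonaldNumerator
    rw [← Matrix.det_mul_column]
    congr 1
    ext i j
    have hj := j.is_lt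
    simp only [Matrix.of_apply]
    rw [hpow i _ _ (by omega), mul_sub, ← pow_succ', ← pow_succ']
    congr 2
    omega
  · refine Finset.sum_congr rfl fun i _ => ?_
    congr 1
    unfold macdonaldNumerator
    rw [← Matrix.det_mul_column]
    congr 1
    ext k j
    have hj := j.is_lt
    simp only [Matrix.of_apply]
    rw [hpow _ _ _ (by omega), mul_sub, ← pow_succ', ← pow_succ']
    congr 2
    omega

theorem boundedAlternantSum_mul_macdonaldDenominator_of_field {K : Type*} [Field K] {n : ℕ} (M : ℕ)
    (x : Fin n → K) (hx : ∀ i, x i ≠ 0) (hx' : ∀ i, 1 + x i ≠ 0) :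
    boundedAlternantSum M x * macdonaldDenominator x = macdonaldNumerator M x := by
  induction n generalizing M with
  | zero =>
    simp [boundedAlternantSum, macdonaldDenominator, macdonaldNumerator]
  | succ n ih =>
    induction M with
    | zero =>
      have h0 : macdonaldNumerator 0 x = 0 := by
        refine Matrix.det_eq_zero_of_column_eq_zero (Fin.last n) fun i => ?_
        rw [Matrix.of_apply, sub_eq_zero]
        congr 1
        simp only [Fin.val_last]
        omega
      simp [h0, boundedAlternantSum]
    | succ M ihM =>
      rw [boundedAlternantSum_succ, macdonaldNumerator_succ M x hx hx', ← ihM, add_mul, mul_assoc,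
        Finset.sum_mul]
      congr 1
      refine Finset.sum_congr rfl fun i _ => ?_
      rw [← ih (M + 1) (fun k => x (i.succAbove k)) (fun k => hx _) (fun k => hx' _),
        macdonaldDenominator_succAbove x i]
      ring

section Map

variable {R S : Type*} [CommRing R] [CommRing S] {n : ℕ}

theorem map_boundedAlternantSum (f : R →+* S) (M : ℕ) (x : Fin n → R) :
    f (boundedAlternantSum M x) = boundedAlternantSum M fun i => f (x i) := by
  simp only [boundedAlternantSum, map_sum, RingHom.map_det]
  refine Finset.sum_congr rfl fun l _ => congrArg Matrix.det ?_
  ext i j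
  simp

theorem map_macdonaldDenominator (f : R →+* S) (x : Fin n → R) :
    f (macdonaldDenominator x) = macdonaldDenominator fun i => f (x i) := by
  simp [macdonaldDenominator, map_prod]

theorem map_macdonaldNumerator (f : R →+* S) (M : ℕ) (x : Fin n → R) :
    f (macdonaldNumerator M x) = macdonaldNumerator M fun i => f (x i) := by
  simp only [macdonaldNumerator, RingHom.map_det]
  congr 1
  ext i j
  simp

end Map

open MvPolynomial in
theorem boundedAlternantSum_mul_macdonaldDenominator {R : Type*} [CommRing R] {n : ℕ} (M : ℕ)
    (x : Fin n → R) :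
    boundedAlternantSum M x * macdonaldDenominator x = macdonaldNumerator M x := by
  have hX : boundedAlternantSum M (X : Fin n → MvPolynomial (Fin n) ℤ) * macdonaldDenominator X =
      macdonaldNumerator M X := by
    have hinj := IsFractionRing.injective (MvPolynomial (Fin n) ℤ)
      (FractionRing (MvPolynomial (Fin n) ℤ))
    apply hinj
    rw [map_mul, map_boundedAlternantSum, map_macdonaldDenominator, map_macdonaldNumerator]
    refine boundedAlternantSum_mul_macdonaldDenominator_of_field M _ (fun i => ?_) fun i => ?_
    · rw [map_ne_zero_iff _ hinj]
      exact X_ne_zero i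
    · rw [← map_one (algebraMap (MvPolynomial (Fin n) ℤ) _), ← map_add, map_ne_zero_iff _ hinj]
      intro h
      have := congrArg (constantCoeff (σ := Fin n) (R := ℤ)) h
      simp at this
  have h := congrArg (eval₂Hom (Int.castRingHom R) x) hX
  rw [map_mul, map_boundedAlternantSum, map_macdonaldDenominator, map_macdonaldNumerator] at h
  simpa using h


/-- **Macdonald's identity** (Theorem I), with denominators cleared.
Partitions `λ ⊆ {m^n}` are encoded as antitone functions `Fin n → Fin (m+1)`
(so `λ_j = l j` for the 0-indexed `j`, each part at most `m`).
The exponent `λ_j + n - j` (for `1 ≤ j ≤ n`) becomes `l j + (n - 1 - j)` and the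
right-hand entries `x_i^{j-1} - x_i^{m+2n-j}` become `x i ^ j - x i ^ (m + 2*n - 1 - j)`
with 0-indexed `j`. -/
theorem macdonald_identity (m n : ℕ) (hm : 0 < m) (hn : 0 < n)
    (R : Type*) [CommRing R] (x : Fin n → R) :
    (∑ l ∈ Finset.univ.filter
        (fun l : Fin n → Fin (m + 1) => ∀ i j : Fin n, i ≤ j → (l j : ℕ) ≤ (l i : ℕ)),
        Matrix.det (Matrix.of fun i j : Fin n => x i ^ ((l j : ℕ) + (n - 1 - (j : ℕ))))) *
      (∏ i : Fin n, (1 - x i)) *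
      (∏ i : Fin n, ∏ j ∈ Finset.Ioi i, (x i * x j - 1)) =
    Matrix.det (Matrix.of fun i j : Fin n =>
      x i ^ (j : ℕ) - x i ^ (m + 2 * n - 1 - (j : ℕ))) := by
  have h := boundedAlternantSum_mul_macdonaldDenominator (m + 1) x
  rw [boundedAlternantSum, macdonaldDenominator, macdonaldNumerator, ← mul_assoc] at h
  rw [h]
  have he : m + 1 + 2 * n - 2 = m + 2 * n - 1 := by omega
  simp only [he]
end

section
/- For every positive even integer m, every positive integer n, and all elements x_1, …, x_n of a commutative ring, the following identity holds: ∑_{λ ⊆ {m^n}, all λ_j even} det((x_i^{λ_j + n − j})_{1≤i,j≤n}) · ∏_{i=1}^n (1 − x_i^2) · ∏_{1 ≤ i < j ≤ n} (x_i x_j − 1) = det((x_i^{j−1} − x_i^{m+2n+1−j})_{1≤i,j≤n}), where the sum is over all partitions λ = (λ_1 ≥ ⋯ ≥ λ_n ≥ 0) with at most n parts, each part even and at most m. (This is the Désarménien–Stembridge identity ∑_{λ ⊆ {m^n}, λ even} s_λ(x_1,…,x_n) = det(x_i^{j−1} − x_i^{m+2n+1−j}) / (∏_i (1−x_i^2)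 ∏_{i<j} (x_i x_j − 1)(x_i − x_j)) with denominators cleared.) -/
open Finset in
/-- Antitone sequences of length `n` with values in `{0, …, p - 1}`. -/
def boundedPartitions (n p : ℕ) : Finset (Fin n → ℕ) :=
  open scoped Classical in (Fintype.piFinset fun _ => range p).filter Antitone

lemma mem_boundedPartitions {n p : ℕ} {l : Fin n → ℕ} :
    l ∈ boundedPartitions n p ↔ (∀ j, l j < p) ∧ Antitone l := by
  simp [boundedPartitions]

/-- Split the partitions with `n + 1` parts according to whether the last part vanishes. -/
lemma sum_boundedPartitions_succ {M : Type*} [AddCommMonoid M] (n p : ℕ)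
    (f : (Fin (n + 1) → ℕ) → M) :
    ∑ l ∈ boundedPartitions (n + 1) (p + 1), f l =
      ∑ l ∈ boundedPartitions (n + 1) p, f (fun j => l j + 1) +
        ∑ l ∈ boundedPartitions n (p + 1), f (Fin.snoc l 0) := by
  rw [← Finset.sum_filter_not_add_sum_filter _ (fun l => l (Fin.last n) = 0)]
  congr 1
  · refine Finset.sum_nbij' (fun l j => l j - 1) (fun l j => l j + 1) ?_ ?_ ?_ ?_ ?_
    · intro l hl
      simp only [Finset.mem_filter, mem_boundedPartitions] at hl ⊢
      obtain ⟨⟨hp, ha⟩, h0⟩ := hl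
      refine ⟨fun j => ?_, fun i j hij => Nat.sub_le_sub_right (ha hij) 1⟩
      have := ha (Fin.le_last j)
      have := hp j
      omega
    · intro l hl
      simp only [Finset.mem_filter, mem_boundedPartitions] at hl ⊢
      exact ⟨⟨fun j => Nat.succ_lt_succ (hl.1 j), fun i j hij => Nat.succ_le_succ (hl.2 hij)⟩,
        Nat.succ_ne_zero _⟩
    · intro l hl
      simp only [Finset.mem_filter, mem_boundedPartitions] at hl
      funext j
      have := hl.1.2 (Fin.le_last j)
      grind
    · intro l _
      simp
    · intro l hl
      simp only [Finset.mem_filter, mem_boundedPartitions] at hl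
      congr 1
      funext j
      have := hl.1.2 (Fin.le_last j)
      grind
  · refine Finset.sum_nbij' (fun l j => l j.castSucc)
      (fun l => (Fin.snoc l 0 : Fin (n + 1) → ℕ)) ?_ ?_ ?_ ?_ ?_
    · intro l hl
      simp only [Finset.mem_filter, mem_boundedPartitions] at hl ⊢
      exact ⟨fun j => hl.1.1 _, fun i j hij => hl.1.2 (Fin.castSucc_le_castSucc_iff.2 hij)⟩
    · intro l hl
      simp only [Finset.mem_filter, mem_boundedPartitions] at hl ⊢
      refine ⟨⟨fun j => ?_, fun i j hij => ?_⟩, by simp⟩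
      · induction j using Fin.lastCases with
        | last => simp
        | cast j => simpa using hl.1 j
      · induction j using Fin.lastCases with
        | last => simp
        | cast j =>
          induction i using Fin.lastCases with
          | last => exact absurd hij (not_le.2 (Fin.castSucc_lt_last j))
          | cast i => simpa using hl.2 (Fin.castSucc_le_castSucc_iff.1 hij)
    · intro l hl
      simp only [Finset.mem_filter] at hl
      funext j
      induction j using Fin.lastCases with
      | last => simp [hl.2]
      | cast j => simp
    · intro l _
      simp
    · intro l hl
      simp only [Finset.mem_filter] at hl
      congr 1
      funext j
      induction j using Fin.lastCases with
      | last => simp [hl.2]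
      | cast j => simp

/-- Sum of the bialternant numerators of the even partitions `2 μ`, where all parts of `μ` are less
than `p`. -/
def evenBialternantSum {R : Type*} [CommRing R] {n : ℕ} (p : ℕ) (x : Fin n → R) : R :=
  ∑ l ∈ boundedPartitions n p,
    Matrix.det (Matrix.of fun i j : Fin n => x i ^ (2 * l j + (n - 1 - (j : ℕ))))

lemma evenBialternantSum_succ {R : Type*} [CommRing R] {n : ℕ} (p : ℕ) (x : Fin (n + 1) → R) :
    evenBialternantSum (p + 1) x = (∏ i, x i) ^ 2 * evenBialternantSum p x +
      ∑ i : Fin (n + 1), (-1) ^ ((i : ℕ) + n) *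
        ((∏ j, x (i.succAbove j)) * evenBialternantSum (p + 1) (fun j => x (i.succAbove j))) := by
  unfold evenBialternantSum
  rw [sum_boundedPartitions_succ, Finset.mul_sum]
  congr 1
  · refine Finset.sum_congr rfl fun l _ => ?_
    rw [← Finset.prod_pow, ← Matrix.det_mul_column]
    congr 1
    ext i j
    simp only [Matrix.of_apply]
    ring
  · simp_rw [Finset.mul_sum]
    rw [Finset.sum_comm]
    refine Finset.sum_congr rfl fun l _ => ?_
    rw [Matrix.det_succ_column _ (Fin.last n)]
    refine Finset.sum_congr rfl fun i _ => ?_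
    rw [← Matrix.det_mul_column]
    simp only [Matrix.of_apply, Fin.snoc_last, Fin.val_last]
    simp only [mul_zero, Nat.add_sub_cancel, Nat.sub_self, add_zero, pow_zero, mul_one]
    congr 2
    ext a b
    simp only [Matrix.submatrix_apply, Matrix.of_apply, Fin.succAbove_last, Fin.snoc_castSucc,
      Fin.val_castSucc]
    rw [← pow_succ']
    congr 1
    omega

lemma prod_prod_Ioi_succAbove {M : Type*} [CommMonoid M] {n : ℕ}
    (f : Fin (n + 1) → Fin (n + 1) → M) (hf : ∀ i j, f i j = f j i) (k : Fin (n + 1)) :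
    ∏ i, ∏ j ∈ Finset.Ioi i, f i j =
      (∏ j, f k (k.succAbove j)) *
        ∏ i : Fin n, ∏ j ∈ Finset.Ioi i, f (k.succAbove i) (k.succAbove j) := by
  have key : ∀ (m : ℕ) (g : Fin m → Fin m → M),
      ∏ i, ∏ j ∈ Finset.Ioi i, g i j = ∏ i, ∏ j, if i < j then g i j else 1 := by
    intro m g
    refine Finset.prod_congr rfl fun i _ => ?_
    rw [← Finset.prod_filter]
    congr 1
    ext j
    simp
  rw [key, key, Fin.prod_univ_succAbove _ k]
  simp_rw [Fin.prod_univ_succAbove _ k]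
  simp only [lt_irrefl, if_false, one_mul, Finset.prod_mul_distrib,
    Fin.succAbove_lt_succAbove_iff]
  rw [← mul_assoc, ← Finset.prod_mul_distrib]
  congr 1
  refine Finset.prod_congr rfl fun j _ => ?_
  rcases lt_or_gt_of_ne (Fin.succAbove_ne k j) with h | h
  · simp [h, h.not_gt, hf k]
  · simp [h, h.not_gt]

/-- The denominator `∏ (1 - x_i ^ 2) * ∏ (x_i x_j - 1)`. -/
def evenDenominator {R : Type*} [CommRing R] {n : ℕ} (x : Fin n → R) : R :=
  (∏ i : Fin n, (1 - x i ^ 2)) * ∏ i : Fin n, ∏ j ∈ Finset.Ioi i, (x i * x j - 1)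

lemma evenDenominator_succAbove {R : Type*} [CommRing R] {n : ℕ} (x : Fin (n + 1) → R)
    (k : Fin (n + 1)) :
    evenDenominator x =
      -(∏ j, (x k * x j - 1)) * evenDenominator (fun j => x (k.succAbove j)) := by
  unfold evenDenominator
  rw [prod_prod_Ioi_succAbove (fun i j => x i * x j - 1) (fun i j => by ring) k,
    Fin.prod_univ_succAbove _ k, Fin.prod_univ_succAbove (fun j => x k * x j - 1) k]
  ring

/-- Expansion of `∏ (t x_j - s)` over subsets. -/
lemma sum_powerset_eq_prod_sub {R : Type*} [CommRing R] {n : ℕ} (x : Fin n → R) (s t : R) :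
    ∑ T : Finset (Fin n), (-1) ^ (n - T.card) * (∏ j ∈ T, x j) * (t ^ T.card * s ^ (n - T.card)) =
      ∏ j, (t * x j - s) := by
  simp_rw [sub_eq_add_neg, Finset.prod_add, Finset.powerset_univ]
  refine Finset.sum_congr rfl fun T _ => ?_
  rw [Finset.prod_mul_distrib, Finset.prod_const, Finset.prod_const,
    Finset.card_sdiff_of_subset (Finset.subset_univ T), Finset.card_univ, Fintype.card_fin,
    neg_pow s]
  ring

/-- The second halves of the terms cancel, since `∏ (x_j - x_i) = 0`. -/
lemma sum_powerset_pow_sub_pow {R : Type*} [CommRing R] {n : ℕ} (x : Fin n → R) (N : ℕ)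
    (hN : n ≤ N) (i : Fin n) :
    ∑ T : Finset (Fin n), (-1) ^ (n - T.card) * (∏ j ∈ T, x j) *
        (x i ^ T.card - x i ^ (N - T.card)) = ∏ j, (x i * x j - 1) := by
  have h1 := sum_powerset_eq_prod_sub x 1 (x i)
  have h2 := sum_powerset_eq_prod_sub x (x i) 1
  rw [Finset.prod_eq_zero (Finset.mem_univ i) (by ring)] at h2
  rw [← h1, eq_comm, ← sub_zero (Finset.sum _ _), ← mul_zero (x i ^ (N - n)), ← h2,
    Finset.mul_sum, ← Finset.sum_sub_distrib]
  refine Finset.sum_congr rfl fun T _ => ?_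
  have hT : T.card ≤ n := by simpa using Finset.card_le_univ T
  rw [show N - T.card = (N - n) + (n - T.card) by omega, pow_add]
  simp
  ring

/-- Evaluate in two ways the determinant of the matrix with columns `u 1, …, u n, v`, where `v` is the
alternating combination of `u 0, …, u (n + 1)` with elementary symmetric coefficients. -/
lemma sum_det_succAbove {R : Type*} [CommRing R] {n : ℕ} (x : Fin (n + 1) → R)
    (u : Fin (n + 1) → ℕ → R) :
    ∑ i : Fin (n + 1), (-1) ^ ((i : ℕ) + n) *
        (-(∑ T : Finset (Fin (n + 1)), (-1) ^ (n + 1 - T.card) * (∏ j ∈ T, x j) * u i T.card) *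
          Matrix.det (Matrix.of fun a b : Fin n => u (i.succAbove a) (b + 1))) =
      Matrix.det (Matrix.of fun i j : Fin (n + 1) => u i j) -
        (∏ i, x i) * Matrix.det (Matrix.of fun i j : Fin (n + 1) => u i (j + 1)) := by
  set A : Matrix (Fin (n + 1)) (Fin (n + 1)) R := Matrix.of fun i j => u i (j + 1) with hA
  have expand : ∀ v : Fin (n + 1) → R,
      A.cramer v (Fin.last n) = ∑ i : Fin (n + 1), (-1) ^ ((i : ℕ) + n) *
        (v i * Matrix.det (Matrix.of fun a b : Fin n => u (i.succAbove a) (b + 1))) := by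
    intro v
    rw [Matrix.cramer_apply, Matrix.det_succ_column _ (Fin.last n)]
    refine Finset.sum_congr rfl fun i _ => ?_
    rw [mul_assoc]
    congr 2
    · simp
    · congr 1
      ext a b
      simp [hA, (Fin.castSucc_lt_last b).ne]
  have hzero : ∀ k, k ≠ 0 → k ≠ n + 1 → k ≤ n + 1 →
      A.cramer (fun i => u i k) (Fin.last n) = 0 := by
    intro k h0 h1 h2
    rw [Matrix.cramer_apply]
    refine Matrix.det_zero_of_column_eq (i := Fin.last n) (j := ⟨k - 1, by omega⟩) ?_ ?_
    · simp only [ne_eq, Fin.ext_iff, Fin.val_last]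
      omega
    · intro i
      rw [Matrix.updateCol_self, Matrix.updateCol_ne (by simp [Fin.ext_iff]; omega)]
      simp only [hA, Matrix.of_apply]
      congr 1
      omega
  have htop : A.cramer (fun i => u i (n + 1)) (Fin.last n) = A.det := by
    rw [Matrix.cramer_apply]
    congr 1
    exact Matrix.updateCol_eq_self A (Fin.last n)
  have hbot : A.cramer (fun i => u i 0) (Fin.last n) =
      (-1) ^ n * Matrix.det (Matrix.of fun i j : Fin (n + 1) => u i j) := by
    rw [Matrix.cramer_apply]
    have := Matrix.det_permute' (finRotate (n + 1)) (Matrix.of fun i j : Fin (n + 1) => u i j)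
    rw [sign_finRotate] at this
    simp only [Units.val_pow_eq_pow_val, Units.val_neg, Units.val_one, Int.cast_pow, Int.cast_neg,
      Int.cast_one, Nat.add_sub_cancel] at this
    rw [← this]
    congr 1
    ext i j
    induction j using Fin.lastCases with
    | last => simp
    | cast j => simp [hA, (Fin.castSucc_lt_last j).ne]
  rw [← expand (fun i => -(∑ T : Finset (Fin (n + 1)),
    (-1) ^ (n + 1 - T.card) * (∏ j ∈ T, x j) * u i T.card))]
  have hv : (fun i => -(∑ T : Finset (Fin (n + 1)),
      (-1) ^ (n + 1 - T.card) * (∏ j ∈ T, x j) * u i T.card)) =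
      -∑ T : Finset (Fin (n + 1)), ((-1) ^ (n + 1 - T.card) * (∏ j ∈ T, x j)) •
        (fun i => u i T.card) := by
    ext i
    simp
  rw [hv, map_neg, map_sum, Pi.neg_apply, Finset.sum_apply]
  simp only [map_smul, Pi.smul_apply, smul_eq_mul]
  rw [Finset.sum_eq_add (∅ : Finset (Fin (n + 1))) Finset.univ]
  · simp only [Finset.card_empty, Finset.card_univ, Fintype.card_fin, htop, hbot]
    have : ((-1 : R) ^ n) * (-1) ^ n = 1 := by rw [← mul_pow]; simp
    simp only [Nat.sub_zero, Finset.prod_empty, Nat.sub_self]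
    linear_combination (Matrix.det (Matrix.of fun i j : Fin (n + 1) => u i j)) * this
  · exact Finset.univ_nonempty.ne_empty.symm
  · intro T _ hT
    have hT' : T.card ≤ n + 1 := by simpa using Finset.card_le_univ T
    rw [hzero _ (by simpa using hT.1) _ hT', mul_zero]
    intro h
    exact hT.2 ((Finset.card_eq_iff_eq_univ T).1 (by simpa using h))
  · simp
  · simp

lemma evenBialternantSum_mul_evenDenominator {R : Type*} [CommRing R] (n p : ℕ) (x : Fin n → R) :
    evenBialternantSum p x * evenDenominator x =
      Matrix.det (Matrix.of fun i j : Fin n =>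
        x i ^ (j : ℕ) - x i ^ (2 * p + 2 * (n - 1) - (j : ℕ))) := by
  induction n generalizing p with
  | zero =>
    have : boundedPartitions 0 p = {Fin.elim0} := by
      ext l
      simp [mem_boundedPartitions, Subsingleton.elim l Fin.elim0, Subsingleton.antitone]
    simp [evenBialternantSum, evenDenominator, this]
  | succ n ihn =>
    induction p with
    | zero =>
      have : boundedPartitions (n + 1) 0 = ∅ := by
        ext l
        simp [mem_boundedPartitions]
      rw [evenBialternantSum, this, Finset.sum_empty, zero_mul, eq_comm]
      refine Matrix.det_eq_zero_of_column_eq_zero (Fin.last n) fun i => ?_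
      simp only [Matrix.of_apply, Fin.val_last]
      rw [sub_eq_zero]
      congr 1
      omega
    | succ p ihp =>
      set N := 2 * (p + 1) + 2 * n with hN
      have key := sum_det_succAbove x (fun i k => x i ^ k - x i ^ (N - k))
      simp_rw [sum_powerset_pow_sub_pow x N (by omega)] at key
      have hshift : (∏ i, x i) ^ 2 * Matrix.det (Matrix.of fun i j : Fin (n + 1) =>
          x i ^ (j : ℕ) - x i ^ (2 * p + 2 * (n + 1 - 1) - (j : ℕ))) =
          (∏ i, x i) * Matrix.det (Matrix.of fun i j : Fin (n + 1) =>
            x i ^ ((j : ℕ) + 1) - x i ^ (N - ((j : ℕ) + 1))) := by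
        rw [sq, mul_assoc, ← Matrix.det_mul_column]
        congr 2
        ext i j
        simp only [Matrix.of_apply]
        rw [mul_sub, ← pow_succ', ← pow_succ']
        congr 2
        omega
      rw [evenBialternantSum_succ, add_mul, mul_assoc, ihp, hshift]
      rw [show 2 * (p + 1) + 2 * (n + 1 - 1) = N from rfl, ← eq_sub_iff_add_eq', ← key,
        Finset.sum_mul]
      refine Finset.sum_congr rfl fun i _ => ?_
      rw [evenDenominator_succAbove x i, mul_assoc, mul_assoc,
        mul_left_comm _ (-_) (evenDenominator _), mul_left_comm _ (-_), ihn, ← Matrix.det_mul_column]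
      congr 3
      ext a b
      simp only [Matrix.of_apply]
      rw [mul_sub, ← pow_succ', ← pow_succ']
      congr 2
      omega


/-- **Désarménien–Stembridge identity** (Theorem II), with denominators cleared.
Partitions `λ ⊆ {m^n}` with all parts even are encoded as antitone functions
`Fin n → Fin (m+1)` all of whose values are even.  With 0-indexed `j`, the exponent
`λ_j + n - j` becomes `l j + (n - 1 - j)` and the right-hand entries
`x_i^{j-1} - x_i^{m+2n+1-j}` become `x i ^ j - x i ^ (m + 2*n - j)`. -/
theorem desarmenien_stembridge (m n : ℕ) (hm : 0 < m) (hmeven : Even m) (hn : 0 < n)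
    (R : Type*) [CommRing R] (x : Fin n → R) :
    (∑ l ∈ Finset.univ.filter
        (fun l : Fin n → Fin (m + 1) =>
          (∀ i j : Fin n, i ≤ j → (l j : ℕ) ≤ (l i : ℕ)) ∧ ∀ j : Fin n, Even (l j : ℕ)),
        Matrix.det (Matrix.of fun i j : Fin n => x i ^ ((l j : ℕ) + (n - 1 - (j : ℕ))))) *
      (∏ i : Fin n, (1 - x i ^ 2)) *
      (∏ i : Fin n, ∏ j ∈ Finset.Ioi i, (x i * x j - 1)) =
    Matrix.det (Matrix.of fun i j : Fin n =>
      x i ^ (j : ℕ) - x i ^ (m + 2 * n - (j : ℕ))) := by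
  obtain ⟨k, rfl⟩ := hmeven
  have h := evenBialternantSum_mul_evenDenominator n (k + 1) x
  rw [show 2 * (k + 1) + 2 * (n - 1) = k + k + 2 * n by omega] at h
  rw [← h, evenDenominator, ← mul_assoc, evenBialternantSum]
  congr 2
  refine Finset.sum_nbij' (fun l j => (l j : ℕ) / 2) (fun l j => Fin.ofNat (k + k + 1) (2 * l j))
    ?_ ?_ ?_ ?_ ?_
  · intro l hl
    simp only [Finset.mem_filter, Finset.mem_univ, true_and] at hl
    rw [mem_boundedPartitions]
    exact ⟨fun j => by have := (l j).isLt; omega,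
      fun i j hij => Nat.div_le_div_right (hl.1 i j hij)⟩
  · intro l hl
    rw [mem_boundedPartitions] at hl
    have hval : ∀ j, 2 * l j % (k + k + 1) = 2 * l j := fun j =>
      Nat.mod_eq_of_lt (by have := hl.1 j; omega)
    simp only [Finset.mem_filter, Finset.mem_univ, true_and, Fin.val_ofNat, hval]
    exact ⟨fun i j hij => Nat.mul_le_mul_left 2 (hl.2 hij), fun j => even_two_mul _⟩
  · intro l hl
    simp only [Finset.mem_filter, Finset.mem_univ, true_and] at hl
    funext j
    rw [Fin.ext_iff, Fin.val_ofNat, Nat.two_mul_div_two_of_even (hl.2 j),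
      Nat.mod_eq_of_lt (l j).isLt]
  · intro l hl
    rw [mem_boundedPartitions] at hl
    funext j
    rw [Fin.val_ofNat, Nat.mod_eq_of_lt (by have := hl.1 j; omega)]
    omega
  · intro l hl
    simp only [Finset.mem_filter, Finset.mem_univ, true_and] at hl
    simp_rw [Nat.two_mul_div_two_of_even (hl.2 _)]
end

section
/- For every positive integer m, every positive even integer n, and all elements x_1, …, x_n of a commutative ring, the following identity holds: ∑_{λ ⊆ {m^n}, λ' even} det((x_i^{λ_j + n − j})_{1≤i,j≤n}) · ∏_{1 ≤ i < j ≤ n} (x_i x_j − 1) = ∑_{σ ∈ S_n} ∑_{S ⊆ {1,…,n}, |S| even} (−1)^{inv(σ)} ∏_{i ∈ S} x_i^{m+2n−1−σ(i)} ∏_{i ∉ S} x_i^{σ(i)−1}, where the outer sum on the left is over all partitions λ with at most n parts, each at most m, whose conjugate partition λ' has all parts even, and inv(σ) denotes the number of inversions of σ. (This is Okada's identity ∑_{λ ⊆ {m^n}, λ' even} s_λ = (1/2)(det(x_i^{j−1} − x_i^{m+2n−1−j}) + det(x_i^{j−1} + x_i^{m+2n−1−j})) / ∏_{i<j} (x_i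 x_j − 1)(x_i − x_j) with denominators cleared.) -/
open scoped Classical

open Finset in
/-- Partial fractions of `z ^ c * ∏ (z y - 1) / ((z - 1) (z + 1) ∏ (z - y))`. -/
theorem sum_residues_eq {K : Type*} [Field K] [DecidableEq K] (h2 : (2 : K) ≠ 0) (T : Finset K)
    (hT : ∀ y ∈ T, y ^ 2 ≠ 1) (c : ℕ) (hc : c ≤ 1) :
    (∑ y ∈ T, y ^ c * ∏ z ∈ T.erase y, (y * z - 1) / (y - z)) + (-1) ^ #T / 2 - (-1) ^ c / 2 =
      if c = 1 then ∏ y ∈ T, y else 0 := by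
  have h1 : (1 : K) ∉ T := fun h => hT 1 h (by simp)
  have h1' : (-1 : K) ∉ T := fun h => hT (-1) h (by simp)
  have h11 : (1 : K) ≠ -1 := by
    intro h
    apply h2
    linear_combination h
  have hins : (1 : K) ∉ insert (-1) T := by simp [h11, h1]
  have hcard : #(insert (1 : K) (insert (-1) T)) = #T + 2 := by
    rw [card_insert_of_notMem hins, card_insert_of_notMem h1']
  set f : Polynomial K := ∏ z ∈ T, (Polynomial.C z * Polynomial.X + Polynomial.C (-1)) with hf
  have hfdeg : f.natDegree ≤ #T := by
    refine (Polynomial.natDegree_prod_le _ _).trans ?_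
    rw [card_eq_sum_ones]
    exact sum_le_sum fun z _ => Polynomial.natDegree_linear_le
  have hfcoeff : f.coeff #T = ∏ y ∈ T, y := by
    have := Polynomial.coeff_prod_of_natDegree_le T
      (fun z : K => Polynomial.C z * Polynomial.X + Polynomial.C (-1)) 1
      (fun z _ => Polynomial.natDegree_linear_le)
    simpa [hf, Polynomial.coeff_one] using this
  have hdeg : (Polynomial.X ^ c * f).natDegree ≤ #T + c := by
    refine Polynomial.natDegree_mul_le.trans ?_
    have := Polynomial.natDegree_X_pow_le (R := K) c
    omega
  have key := Lagrange.coeff_eq_sum (s := insert (1 : K) (insert (-1) T)) (v := id)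
    (Set.injOn_id _) (P := Polynomial.X ^ c * f)
    (lt_of_le_of_lt Polynomial.degree_le_natDegree (by
      rw [hcard]
      exact_mod_cast (by omega : (Polynomial.X ^ c * f).natDegree < #T + 2)))
  rw [hcard] at key
  have hL : (Polynomial.X ^ c * f).coeff (#T + 2 - 1) = if c = 1 then ∏ y ∈ T, y else 0 := by
    obtain rfl | rfl : c = 0 ∨ c = 1 := by omega
    · simp only [pow_zero, one_mul]
      rw [Polynomial.coeff_eq_zero_of_natDegree_lt (by omega)]
      simp
    · rw [pow_one, show #T + 2 - 1 = #T + 1 by omega, Polynomial.coeff_X_mul, hfcoeff]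
      simp
  rw [← hL, key, sum_insert hins, sum_insert h1', erase_insert hins]
  have he : (insert (1 : K) (insert (-1) T)).erase (-1) = insert 1 T := by
    rw [Finset.insert_comm, erase_insert]
    simp [h11.symm, h1']
  rw [he]
  have hfe : ∀ y : K, f.eval y = ∏ z ∈ T, (y * z - 1) := by
    intro y
    rw [hf, Polynomial.eval_prod]
    refine prod_congr rfl fun z _ => ?_
    simp only [Polynomial.eval_add, Polynomial.eval_mul, Polynomial.eval_C, Polynomial.eval_X]
    ring
  have e1 : ∀ y ∈ T, Polynomial.eval (id y) (Polynomial.X ^ c * f) /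
      ∏ j ∈ (insert (1 : K) (insert (-1) T)).erase y, (id y - id j) =
      y ^ c * ∏ z ∈ T.erase y, (y * z - 1) / (y - z) := by
    intro y hy
    have hy1 : y ≠ 1 := fun h => h1 (h ▸ hy)
    have hy2 : y ≠ -1 := fun h => h1' (h ▸ hy)
    rw [erase_insert_of_ne hy1.symm, erase_insert_of_ne hy2.symm, prod_insert, prod_insert]
    · have a1 : y - 1 ≠ 0 := sub_ne_zero.2 hy1
      have a2 : y + 1 ≠ 0 := by
        intro h
        exact hy2 (by linear_combination h)
      have a3 : ∏ z ∈ T.erase y, (y - z) ≠ 0 := by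
        refine prod_ne_zero_iff.2 fun z hz => sub_ne_zero.2 (ne_of_mem_erase hz).symm
      simp only [Polynomial.eval_mul, Polynomial.eval_pow, Polynomial.eval_X, hfe, id,
        prod_div_distrib, sub_neg_eq_add]
      rw [← mul_prod_erase T _ hy]
      field_simp
      ring
    · simp [h1']
    · simp [h11, h1]
  rw [sum_congr rfl e1, prod_insert h1', prod_insert h1]
  have e2 : ∏ z ∈ T, ((1 : K) * z - 1) = (-1) ^ #T * ∏ z ∈ T, (1 - z) := by
    rw [← prod_const, ← prod_mul_distrib]
    exact prod_congr rfl fun z _ => by ring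
  have e3 : ∏ z ∈ T, ((-1 : K) * z - 1) = ∏ z ∈ T, (-1 - z) :=
    prod_congr rfl fun z _ => by ring
  have a4 : ∏ z ∈ T, (1 - z) ≠ 0 :=
    prod_ne_zero_iff.2 fun z hz => sub_ne_zero.2 fun h => h1 (h ▸ hz)
  have a5 : ∏ z ∈ T, (-1 - z) ≠ 0 :=
    prod_ne_zero_iff.2 fun z hz => sub_ne_zero.2 fun h => h1' (h ▸ hz)
  simp only [Polynomial.eval_mul, Polynomial.eval_pow, Polynomial.eval_X, hfe, id, e2, e3]
  rw [show (1 : K) - -1 = 2 by ring, show (-1 : K) - 1 = -2 by ring]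
  field_simp
  ring

open Finset in
theorem sum_pow_mul_prod_div {ι K : Type*} [DecidableEq ι] [Field K] (h2 : (2 : K) ≠ 0)
    (x : ι → K) (hx : Function.Injective x) (hx1 : ∀ i, x i ^ 2 ≠ 1) (T : Finset ι) (c : ℕ)
    (hc : c ≤ 1) :
    (∑ i ∈ T, x i ^ c * ∏ k ∈ T.erase i, (x i * x k - 1) / (x i - x k)) =
      (if c = 1 then ∏ i ∈ T, x i else 0) - (-1) ^ #T / 2 + (-1) ^ c / 2 := by
  have h := sum_residues_eq h2 (T.map ⟨x, hx⟩) (by simpa using fun i _ => hx1 i) c hc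
  rw [sum_map, prod_map, card_map] at h
  have e : ∀ i, (T.map ⟨x, hx⟩).erase (x i) = (T.erase i).map ⟨x, hx⟩ :=
    fun i => (map_erase ⟨x, hx⟩ T i).symm
  simp only [e, prod_map, Function.Embedding.coeFn_mk] at h
  rw [← h]
  ring

/-- The product of `F i j` over the pairs `i < j` in `s`. -/
def pairProd {ι M : Type*} [LinearOrder ι] [CommMonoid M] (F : ι → ι → M) (s : Finset ι) : M :=
  ∏ i ∈ s, ∏ j ∈ s with i < j, F i j

open Finset in
theorem pairProd_insert {ι M : Type*} [LinearOrder ι] [CommMonoid M] (F : ι → ι → M)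
    (hF : ∀ i j, F i j = F j i) (s : Finset ι) (a : ι) (ha : a ∉ s) :
    pairProd F (insert a s) = (∏ k ∈ s, F a k) * pairProd F s := by
  simp only [pairProd, prod_filter]
  rw [prod_insert ha, prod_insert ha]
  simp only [prod_insert ha, lt_irrefl, if_false, one_mul]
  rw [prod_mul_distrib, ← mul_assoc, ← prod_mul_distrib]
  congr 1
  refine prod_congr rfl fun k hk => ?_
  rcases lt_trichotomy a k with h | h | h
  · simp [h, h.not_gt]
  · exact absurd (h ▸ hk) ha
  · simp [h, h.not_gt, hF k a]

open Finset in
theorem pairProd_congr {ι M : Type*} [LinearOrder ι] [CommMonoid M] {F G : ι → ι → M}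
    {s : Finset ι} (h : ∀ i ∈ s, ∀ j ∈ s, i < j → F i j = G i j) :
    pairProd F s = pairProd G s :=
  prod_congr rfl fun i hi => prod_congr rfl fun j hj =>
    h i hi j (mem_filter.1 hj).1 (mem_filter.1 hj).2

open Finset in
theorem pairProd_mul {ι M : Type*} [LinearOrder ι] [CommMonoid M] (F G : ι → ι → M)
    (s : Finset ι) : pairProd (fun i j => F i j * G i j) s = pairProd F s * pairProd G s := by
  simp [pairProd, prod_mul_distrib]

open Finset in
theorem pairProd_ne_zero {ι K : Type*} [LinearOrder ι] [Field K] {F : ι → ι → K} {s : Finset ι}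
    (h : ∀ i j, i ≠ j → F i j ≠ 0) : pairProd F s ≠ 0 :=
  prod_ne_zero_iff.2 fun i _ => prod_ne_zero_iff.2 fun j hj => h i j (mem_filter.1 hj).2.ne

open Finset in
theorem pairProd_map {κ ι M : Type*} [LinearOrder κ] [LinearOrder ι] [CommMonoid M]
    (F : ι → ι → M) (f : κ ↪o ι) (s : Finset κ) :
    pairProd F (s.map f.toEmbedding) = pairProd (fun i j => F (f i) (f j)) s := by
  simp [pairProd, prod_filter]

/-- The symmetric pair factor in the denominator of the term indexed by `S`, obtained from
`(x i - x j) * (x i * x j - 1)` on removing the Vandermonde factor of the variables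
inverted on `S`. -/
def pairFactor {ι K : Type*} [DecidableEq ι] [CommRing K] (x : ι → K) (S : Finset ι)
    (i j : ι) : K :=
  if i ∈ S then (if j ∈ S then x i * x j - 1 else x i - x j)
  else (if j ∈ S then x j - x i else 1 - x i * x j)

theorem pairFactor_comm {ι K : Type*} [DecidableEq ι] [CommRing K] (x : ι → K) (S : Finset ι)
    (i j : ι) : pairFactor x S i j = pairFactor x S j i := by
  unfold pairFactor
  split_ifs <;> ring

theorem pairFactor_ne_zero {ι K : Type*} [DecidableEq ι] [CommRing K] (x : ι → K)
    (hx : Function.Injective x) (hx1 : ∀ i j, x i * x j ≠ 1) (S : Finset ι) (i j : ι)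
    (hij : i ≠ j) : pairFactor x S i j ≠ 0 := by
  unfold pairFactor
  split_ifs
  · exact sub_ne_zero.2 (hx1 i j)
  · exact sub_ne_zero.2 (hx.ne hij)
  · exact sub_ne_zero.2 (hx.ne hij.symm)
  · exact sub_ne_zero.2 (hx1 i j).symm

/-- The sum of `x_S ^ N / ∏ pairFactor` over the subsets `S` of `s` with `|S| ≡ p` mod `2`. -/
def paritySum {ι K : Type*} [LinearOrder ι] [Field K] (x : ι → K) (p N : ℕ) (s : Finset ι) : K :=
  ∑ S ∈ s.powerset with Even (S.card + p), (∏ i ∈ S, x i ^ N) / pairProd (pairFactor x S) s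

/-- Multiplication by `z ^ a` in a new variable followed by antisymmetrization, divided by the
Vandermonde product. -/
def divAlt {ι K : Type*} [DecidableEq ι] [Field K] (x : ι → K) (a : ℕ) (F : Finset ι → K)
    (s : Finset ι) : K :=
  ∑ i ∈ s, x i ^ a / (∏ k ∈ s.erase i, (x i - x k)) * F (s.erase i)

open Finset in
theorem divAlt_paritySum_eq_sum {ι K : Type*} [LinearOrder ι] [Field K] (x : ι → K)
    (hx : Function.Injective x) (hx1 : ∀ i j, x i * x j ≠ 1) (p N c : ℕ) (s : Finset ι) :
    divAlt x (N + c) (paritySum x p N) s =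
      ∑ T ∈ s.powerset with Even (#T + (p + 1)), (∏ i ∈ T, x i ^ N) / pairProd (pairFactor x T) s *
        ∑ i ∈ T, x i ^ c * ∏ k ∈ T.erase i, (x i * x k - 1) / (x i - x k) := by
  simp only [divAlt, paritySum, mul_sum]
  rw [sum_sigma', sum_sigma']
  refine sum_bij' (fun a _ => ⟨insert a.1 a.2, a.1⟩) (fun b _ => ⟨b.2, b.1.erase b.2⟩)
    ?_ ?_ ?_ ?_ ?_
  · rintro ⟨i, S⟩ h
    simp only [mem_sigma, mem_filter, mem_powerset] at h ⊢
    obtain ⟨hi, hS, hE⟩ := h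
    have hiS : i ∉ S := fun h => (notMem_erase i s) (hS h)
    refine ⟨⟨insert_subset hi (hS.trans (erase_subset _ _)), ?_⟩, mem_insert_self _ _⟩
    rw [card_insert_of_notMem hiS]
    rw [show #S + 1 + (p + 1) = #S + p + 2 by ring]
    exact hE.add even_two
  · rintro ⟨T, i⟩ h
    simp only [mem_sigma, mem_filter, mem_powerset] at h ⊢
    obtain ⟨⟨hT, hE⟩, hi⟩ := h
    refine ⟨hT hi, erase_subset_erase _ hT, ?_⟩
    have := card_erase_add_one hi
    rw [← this] at hE
    rw [Nat.even_iff] at hE ⊢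
    omega
  · rintro ⟨i, S⟩ h
    simp only [mem_sigma, mem_filter, mem_powerset] at h ⊢
    have hiS : i ∉ S := fun h' => (notMem_erase i s) (h.2.1 h')
    simp [erase_insert hiS]
  · rintro ⟨T, i⟩ h
    simp only [mem_sigma, mem_filter, mem_powerset] at h ⊢
    simp [insert_erase h.2]
  · rintro ⟨i, S⟩ h
    simp only [mem_sigma, mem_filter, mem_powerset] at h ⊢
    obtain ⟨hi, hS, hE⟩ := h
    have hiS : i ∉ S := fun h => (notMem_erase i s) (hS h)
    rw [erase_insert hiS, prod_insert hiS]
    have e1 : pairProd (pairFactor x (insert i S)) s =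
        ((∏ k ∈ S, (x i * x k - 1)) * ∏ k ∈ s.erase i \ S, (x i - x k)) *
          pairProd (pairFactor x S) (s.erase i) := by
      conv_lhs => rw [← insert_erase hi]
      rw [pairProd_insert _ (pairFactor_comm x _) _ _ (notMem_erase i s),
        ← prod_sdiff hS, mul_comm (∏ k ∈ s.erase i \ S, _)]
      congr 1
      · congr 1
        · refine prod_congr rfl fun k hk => ?_
          simp [pairFactor, hk]
        · refine prod_congr rfl fun k hk => ?_
          simp only [mem_sdiff, mem_erase] at hk
          simp [pairFactor, hk.2, hk.1.1]
      · refine pairProd_congr fun a ha b hb _ => ?_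
        simp [pairFactor, (mem_erase.1 ha).1, (mem_erase.1 hb).1]
    have hne : ∀ k ∈ s.erase i, x i - x k ≠ 0 := fun k hk =>
      sub_ne_zero.2 (hx.ne (mem_erase.1 hk).1.symm)
    have n1 : ∏ k ∈ S, (x i - x k) ≠ 0 := prod_ne_zero_iff.2 fun k hk => hne k (hS hk)
    have n2 : ∏ k ∈ s.erase i \ S, (x i - x k) ≠ 0 :=
      prod_ne_zero_iff.2 fun k hk => hne k (mem_sdiff.1 hk).1
    have n3 : ∏ k ∈ S, (x i * x k - 1) ≠ 0 :=
      prod_ne_zero_iff.2 fun k _ => sub_ne_zero.2 (hx1 i k)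
    have n4 : pairProd (pairFactor x S) (s.erase i) ≠ 0 :=
      pairProd_ne_zero fun i j h => pairFactor_ne_zero x hx hx1 S i j h
    rw [e1, ← prod_sdiff hS, prod_div_distrib]
    field_simp
    ring

open Finset in
theorem divAlt_paritySum_even {ι K : Type*} [LinearOrder ι] [Field K] (h2 : (2 : K) ≠ 0)
    (x : ι → K) (hx : Function.Injective x) (hx1 : ∀ i j, x i * x j ≠ 1) (N : ℕ) :
    divAlt x N (paritySum x 0 N) = paritySum x 1 N := by
  funext s
  have := divAlt_paritySum_eq_sum x hx hx1 0 N 0 s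
  rw [add_zero] at this
  rw [this, paritySum]
  refine sum_congr rfl fun T hT => ?_
  have hT' : Odd #T := by
    have := (mem_filter.1 hT).2
    rw [Nat.even_iff] at this
    rw [Nat.odd_iff]
    omega
  rw [sum_pow_mul_prod_div h2 x hx (fun i => by rw [sq]; exact hx1 i i) T 0 (by norm_num),
    hT'.neg_one_pow]
  field_simp
  norm_num

open Finset in
theorem divAlt_paritySum_odd {ι K : Type*} [LinearOrder ι] [Field K] (h2 : (2 : K) ≠ 0)
    (x : ι → K) (hx : Function.Injective x) (hx1 : ∀ i j, x i * x j ≠ 1) (N : ℕ) (s : Finset ι) :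
    divAlt x (N + 1) (paritySum x 1 N) s = paritySum x 0 (N + 1) s - paritySum x 0 N s := by
  rw [divAlt_paritySum_eq_sum x hx hx1 1 N 1 s, paritySum, paritySum, ← sum_sub_distrib]
  refine sum_congr ?_ fun T hT => ?_
  · simp [Nat.even_add]
  have hT' : Even #T := by
    have := (mem_filter.1 hT).2
    rw [Nat.even_iff] at this ⊢
    omega
  rw [sum_pow_mul_prod_div h2 x hx (fun i => by rw [sq]; exact hx1 i i) T 1 (by norm_num),
    hT'.neg_one_pow]
  simp only [pow_succ, prod_mul_distrib, if_true, pow_zero]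
  field_simp
  ring

open Finset in
theorem prod_mul_prod_compl_eq_prod_ite {ι M : Type*} [Fintype ι] [DecidableEq ι] [CommMonoid M]
    (S : Finset ι) (f g : ι → M) :
    (∏ i ∈ S, f i) * ∏ i ∈ Sᶜ, g i = ∏ i, if i ∈ S then f i else g i := by
  rw [← prod_mul_prod_compl S]
  congr 1
  · exact prod_congr rfl fun i hi => by simp [hi]
  · exact prod_congr rfl fun i hi => by simp [mem_compl.1 hi]

open Finset in
/-- Exchanging the values `0` and `n - 1` of the permutation and toggling the membership of their
preimages in `S` cancels the terms in pairs. -/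
theorem sum_sign_mul_prod_rev_eq_zero {R : Type*} [CommRing R] (n : ℕ) (x : Fin (n + 2) → R) :
    ∑ σ : Equiv.Perm (Fin (n + 2)), ∑ S : Finset (Fin (n + 2)) with Even #S,
      ((Equiv.Perm.sign σ : ℤ) : R) *
        ((∏ i ∈ S, x i ^ (n + 1 - (σ i : ℕ))) * ∏ i ∈ Sᶜ, x i ^ (σ i : ℕ)) = 0 := by
  simp only [prod_mul_prod_compl_eq_prod_ite]
  rw [← sum_product']
  set τ : Equiv.Perm (Fin (n + 2)) := Equiv.swap 0 (Fin.last _) with hτ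
  have h0l : (0 : Fin (n + 2)) ≠ Fin.last (n + 1) := by
    simp [Fin.ext_iff]
  have hττ : τ * τ = 1 := by simp [hτ]
  refine sum_involution
    (fun a _ => (τ * a.1, symmDiff a.2 {a.1.symm 0, a.1.symm (Fin.last _)})) ?_ ?_ ?_ ?_
  · rintro ⟨σ, S⟩ -
    have hs : Equiv.Perm.sign (τ * σ) = - Equiv.Perm.sign σ := by
      rw [Equiv.Perm.sign_mul, hτ, Equiv.Perm.sign_swap h0l, neg_one_mul]
    have hprod : (∏ i, if i ∈ symmDiff S {σ.symm 0, σ.symm (Fin.last _)} then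
        x i ^ (n + 1 - ((τ * σ) i : ℕ)) else x i ^ ((τ * σ) i : ℕ)) =
        ∏ i, if i ∈ S then x i ^ (n + 1 - (σ i : ℕ)) else x i ^ (σ i : ℕ) := by
      refine prod_congr rfl fun i _ => ?_
      have m : i ∈ symmDiff S {σ.symm 0, σ.symm (Fin.last _)} ↔
          (i ∈ S ∧ ¬ (σ i = 0 ∨ σ i = Fin.last _)) ∨ ((σ i = 0 ∨ σ i = Fin.last _) ∧ i ∉ S) := by
        simp [mem_symmDiff, Equiv.eq_symm_apply]
      simp only [m, Equiv.Perm.mul_apply]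
      by_cases c0 : σ i = 0
      · by_cases hS : i ∈ S <;> simp [c0, hτ, hS]
      by_cases c1 : σ i = Fin.last _
      · by_cases hS : i ∈ S <;> simp [c1, hτ, hS]
      rw [hτ, Equiv.swap_apply_of_ne_of_ne c0 c1]
      simp [c0, c1]
    simp only [hs, hprod]
    push_cast
    ring
  · rintro ⟨σ, S⟩ - - h
    have h1 : τ * σ = σ := congrArg Prod.fst h
    have h2 : τ = 1 := by simpa using h1
    have h3 : τ 0 = 0 := by rw [h2]; rfl
    rw [hτ, Equiv.swap_apply_left] at h3
    exact h0l h3.symm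
  · rintro ⟨σ, S⟩ h
    simp only [mem_product, mem_univ, true_and, mem_filter] at h ⊢
    set P : Finset (Fin (n + 2)) := {σ.symm 0, σ.symm (Fin.last _)} with hP
    have hPc : #P = 2 := card_pair (fun h => h0l (σ.symm.injective h))
    have e1 : #(symmDiff S P) = #(S \ P) + #(P \ S) := by
      rw [symmDiff_def, sup_eq_union, card_union_of_disjoint disjoint_sdiff_sdiff]
    have e2 := card_sdiff_add_card_inter S P
    have e3 := card_sdiff_add_card_inter P S
    rw [inter_comm] at e3
    rw [Nat.even_iff] at h ⊢
    omega
  · rintro ⟨σ, S⟩ h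
    have hinv : ∀ y, (τ * σ).symm y = σ.symm (τ y) := by
      intro y
      rw [Equiv.symm_apply_eq, Equiv.Perm.mul_apply, Equiv.apply_symm_apply,
        ← Equiv.Perm.mul_apply, hττ]
      rfl
    simp only [hinv]
    rw [← mul_assoc, hττ, one_mul, hτ, Equiv.swap_apply_left, Equiv.swap_apply_right,
      pair_comm (σ.symm (Fin.last _)), symmDiff_symmDiff_cancel_right]

/-- The factor of the Vandermonde determinant of the variables inverted on `S`, with denominators
cleared. -/
def vandermondeFactor {ι R : Type*} [DecidableEq ι] [CommRing R] (x : ι → R) (S : Finset ι)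
    (i j : ι) : R :=
  (if j ∈ S then 1 else x j) * (if i ∈ S then x i else 1) -
    (if i ∈ S then 1 else x i) * (if j ∈ S then x j else 1)

theorem vandermondeFactor_mul_pairFactor {ι R : Type*} [DecidableEq ι] [CommRing R] (x : ι → R)
    (S : Finset ι) (i j : ι) :
    vandermondeFactor x S i j * pairFactor x S i j = (x i - x j) * (x i * x j - 1) := by
  unfold vandermondeFactor pairFactor
  split_ifs <;> ring

open Finset in
theorem sum_sign_mul_prod_eq_pairProd {R : Type*} [CommRing R] (n N : ℕ) (x : Fin n → R)
    (S : Finset (Fin n)) :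
    ∑ σ : Equiv.Perm (Fin n), ((Equiv.Perm.sign σ : ℤ) : R) *
        ((∏ i ∈ S, x i ^ (N + (n - 1 - (σ i : ℕ)))) * ∏ i ∈ Sᶜ, x i ^ (σ i : ℕ)) =
      (∏ i ∈ S, x i ^ N) * pairProd (vandermondeFactor x S) univ := by
  have h := Matrix.det_projVandermonde (fun i => if i ∈ S then 1 else x i)
    (fun i => if i ∈ S then x i else 1)
  rw [← Matrix.det_transpose, Matrix.det_apply'] at h
  have e : pairProd (vandermondeFactor x S) univ = ∏ i : Fin n, ∏ j ∈ Ioi i,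
      ((if j ∈ S then 1 else x j) * (if i ∈ S then x i else 1) -
        (if i ∈ S then 1 else x i) * (if j ∈ S then x j else 1)) := by
    simp [pairProd, vandermondeFactor, filter_lt_eq_Ioi]
  rw [e, ← h, mul_sum]
  refine sum_congr rfl fun σ _ => ?_
  have e2 : ∏ i ∈ S, x i ^ (N + (n - 1 - (σ i : ℕ))) =
      (∏ i ∈ S, x i ^ N) * ∏ i ∈ S, x i ^ (n - 1 - (σ i : ℕ)) := by
    rw [← prod_mul_distrib]
    exact prod_congr rfl fun i _ => pow_add _ _ _
  rw [e2, mul_assoc, prod_mul_prod_compl_eq_prod_ite, mul_left_comm]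
  congr 2
  refine prod_congr rfl fun i _ => ?_
  rw [Matrix.transpose_apply, Matrix.projVandermonde_apply, Fin.val_rev,
    show n - (σ i + 1) = n - 1 - (σ i : ℕ) by omega]
  split_ifs <;> simp

open Finset in
theorem sum_sign_mul_prod_eq_mul_paritySum {K : Type*} [Field K] (n N : ℕ) (x : Fin n → K)
    (hx : Function.Injective x) (hx1 : ∀ i j, x i * x j ≠ 1) :
    ∑ σ : Equiv.Perm (Fin n), ∑ S : Finset (Fin n) with Even #S,
      ((Equiv.Perm.sign σ : ℤ) : K) *
        ((∏ i ∈ S, x i ^ (N + (n - 1 - (σ i : ℕ)))) * ∏ i ∈ Sᶜ, x i ^ (σ i : ℕ)) =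
      pairProd (fun i j => (x i - x j) * (x i * x j - 1)) univ * paritySum x 0 N univ := by
  rw [sum_comm, paritySum, mul_sum, powerset_univ]
  refine sum_congr (by simp) fun S _ => ?_
  rw [sum_sign_mul_prod_eq_pairProd]
  have h : pairProd (fun i j => (x i - x j) * (x i * x j - 1)) univ =
      pairProd (vandermondeFactor x S) univ * pairProd (pairFactor x S) univ := by
    rw [← pairProd_mul]
    exact pairProd_congr fun i _ j _ _ => (vandermondeFactor_mul_pairFactor x S i j).symm
  have h' : pairProd (pairFactor x S) univ ≠ 0 :=
    pairProd_ne_zero fun i j h => pairFactor_ne_zero x hx hx1 S i j h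
  rw [h]
  field_simp

open Finset in
theorem paritySum_map {κ ι K : Type*} [LinearOrder κ] [LinearOrder ι] [Field K] (x : ι → K)
    (f : κ ↪o ι) (p N : ℕ) (s : Finset κ) :
    paritySum x p N (s.map f.toEmbedding) = paritySum (fun i => x (f i)) p N s := by
  unfold paritySum
  symm
  refine sum_bij' (fun S _ => S.map f.toEmbedding)
    (fun T _ => T.preimage f f.injective.injOn) ?_ ?_ ?_ ?_ ?_
  · intro S hS
    simpa using hS
  · intro T hT
    simp only [mem_filter, mem_powerset] at hT ⊢
    obtain ⟨S, hS, rfl⟩ := subset_map_iff.1 hT.1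
    rw [card_map] at hT
    have : (S.map f.toEmbedding).preimage f f.injective.injOn = S := by ext; simp
    rw [this]
    exact ⟨hS, hT.2⟩
  · intro S _
    ext
    simp
  · intro T hT
    obtain ⟨S, hS, rfl⟩ := subset_map_iff.1 (mem_powerset.1 (mem_filter.1 hT).1)
    ext a
    simp
  · intro S _
    rw [prod_map, pairProd_map]
    congr 1
    refine pairProd_congr fun i _ j _ _ => ?_
    simp [pairFactor]

open Finset in
theorem paritySum_zero_zero {ι K : Type*} [LinearOrder ι] [Field K] (x : ι → K)
    (hx : Function.Injective x) (hx1 : ∀ i j, x i * x j ≠ 1) (n : ℕ) (s : Finset ι)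
    (hs : #s = n + 2) : paritySum x 0 0 s = 0 := by
  have hs' : s = univ.map (s.orderEmbOfFin hs).toEmbedding := by
    rw [map_orderEmbOfFin_univ]
  rw [hs', paritySum_map]
  have hy : Function.Injective fun i => x (s.orderEmbOfFin hs i) :=
    hx.comp (s.orderEmbOfFin hs).injective
  have h := sum_sign_mul_prod_eq_mul_paritySum (n + 2) 0 (fun i => x (s.orderEmbOfFin hs i)) hy
    (fun i j => hx1 _ _)
  have h' := sum_sign_mul_prod_rev_eq_zero n (fun i => x (s.orderEmbOfFin hs i))
  simp only [zero_add, show n + 2 - 1 = n + 1 by omega] at h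
  rw [h'] at h
  refine (mul_eq_zero.1 h.symm).resolve_left (pairProd_ne_zero fun i j hij => ?_)
  exact mul_ne_zero (sub_ne_zero.2 (hy.ne hij)) (sub_ne_zero.2 (hx1 _ _))

open Finset in
theorem divAlt_congr {ι K : Type*} [DecidableEq ι] [Field K] (x : ι → K) (a : ℕ)
    {F G : Finset ι → K} {s : Finset ι} (h : ∀ i ∈ s, F (s.erase i) = G (s.erase i)) :
    divAlt x a F s = divAlt x a G s :=
  sum_congr rfl fun i hi => by rw [h i hi]

open Finset in
theorem divAlt_sum {ι α K : Type*} [DecidableEq ι] [Field K] (x : ι → K) (a : ℕ)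
    (A : Finset α) (F : α → Finset ι → K) (s : Finset ι) :
    divAlt x a (fun t => ∑ l ∈ A, F l t) s = ∑ l ∈ A, divAlt x a (F l) s := by
  simp only [divAlt, mul_sum]
  exact sum_comm

open Finset in
theorem divAlt_add {ι K : Type*} [DecidableEq ι] [Field K] (x : ι → K) (a : ℕ)
    (F G : Finset ι → K) (s : Finset ι) :
    divAlt x a (fun t => F t + G t) s = divAlt x a F s + divAlt x a G s := by
  simp only [divAlt, mul_add, sum_add_distrib]

open Finset in
theorem divAlt_zero {ι K : Type*} [DecidableEq ι] [Field K] (x : ι → K) (a : ℕ)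
    (s : Finset ι) : divAlt x a (fun _ => 0) s = 0 := by
  simp [divAlt]

open Finset in
theorem divAlt_divAlt_self {ι K : Type*} [DecidableEq ι] [Field K] (x : ι → K) (a : ℕ)
    (F : Finset ι → K) (s : Finset ι) : divAlt x a (divAlt x a F) s = 0 := by
  simp only [divAlt, mul_sum]
  rw [sum_sigma']
  refine sum_involution (fun p _ => ⟨p.2, p.1⟩) ?_ ?_ ?_ ?_
  · rintro ⟨i, j⟩ h
    simp only [mem_sigma, mem_erase] at h
    obtain ⟨hi, hji, hj⟩ := h
    have e : ∀ i j, i ≠ j → j ∈ s → ∏ k ∈ s.erase i, (x i - x k) =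
        (x i - x j) * ∏ k ∈ (s.erase i).erase j, (x i - x k) := fun i j hij hj =>
      (mul_prod_erase _ _ (mem_erase.2 ⟨hij.symm, hj⟩)).symm
    simp only
    rw [e i j hji.symm hj, e j i hji hi, erase_right_comm (a := j) (b := i),
      ← neg_sub (x i) (x j), neg_mul, div_neg]
    simp only [div_eq_mul_inv, mul_inv]
    ring
  · rintro ⟨i, j⟩ h _ he
    simp only [mem_sigma, mem_erase] at h
    simp only [Sigma.mk.injEq] at he
    exact h.2.1 he.1
  · rintro ⟨i, j⟩ h
    simp only [mem_sigma, mem_erase] at h ⊢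
    exact ⟨h.2.2, h.2.1.symm, h.1⟩
  · rintro ⟨i, j⟩ _
    rfl

/-- The sum of the alternants with exponents `k₁ + 1, k₁, k₂ + 1, k₂, …, k_h + 1, k_h` over
`N > k₁ > k₂ > ⋯ > k_h`, divided by the Vandermonde product. -/
def pairSum {ι K : Type*} [DecidableEq ι] [Field K] (x : ι → K) : ℕ → ℕ → Finset ι → K
  | 0, _, _ => 1
  | _ + 1, 0, _ => 0
  | h + 1, N + 1, s =>
    pairSum x (h + 1) N s + divAlt x (N + 1) (divAlt x N (pairSum x h N)) s

theorem pairSum_zero {ι K : Type*} [DecidableEq ι] [Field K] (x : ι → K) (N : ℕ) :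
    pairSum x 0 N = fun _ => 1 := by
  funext s
  rw [pairSum]

theorem pairSum_succ_succ {ι K : Type*} [DecidableEq ι] [Field K] (x : ι → K) (h N : ℕ) :
    pairSum x (h + 1) (N + 1) = fun s =>
      pairSum x (h + 1) N s + divAlt x (N + 1) (divAlt x N (pairSum x h N)) s := by
  funext s
  rw [pairSum]

theorem divAlt_pairSum_pred {ι K : Type*} [DecidableEq ι] [Field K] (x : ι → K) (h N : ℕ) :
    divAlt x N (pairSum x h N) = divAlt x N (pairSum x h (N - 1)) := by
  cases N with
  | zero => rfl
  | succ N =>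
    cases h with
    | zero => simp only [pairSum_zero]
    | succ h =>
      funext s
      rw [pairSum_succ_succ, divAlt_add, divAlt_divAlt_self, add_zero, Nat.add_sub_cancel]

theorem pairSum_eq_zero {ι K : Type*} [DecidableEq ι] [Field K] (x : ι → K) (h N : ℕ)
    (hN : N ≤ 2 * h) : pairSum x (h + 1) N = fun _ => 0 := by
  induction h generalizing N with
  | zero =>
    obtain rfl : N = 0 := by omega
    funext s
    rw [pairSum]
  | succ h ih =>
    induction N with
    | zero =>
      funext s
      rw [pairSum]
    | succ N ihN =>
      funext s
      rw [pairSum_succ_succ, ihN (by omega), divAlt_pairSum_pred, ih (N - 1) (by omega)]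
      have : divAlt x N (fun _ => (0 : K)) = fun _ => 0 := funext (divAlt_zero x N)
      simp only [this, divAlt_zero, add_zero]

open Finset in
theorem pairSum_eq_paritySum {ι K : Type*} [LinearOrder ι] [Field K] (h2 : (2 : K) ≠ 0)
    (x : ι → K) (hx : Function.Injective x) (hx1 : ∀ i j, x i * x j ≠ 1) (h N : ℕ)
    (s : Finset ι) (hs : #s = 2 * h) : pairSum x h N s = paritySum x 0 N s := by
  induction h generalizing N s with
  | zero =>
    obtain rfl : s = ∅ := card_eq_zero.1 (by simpa using hs)
    simp [pairSum_zero, paritySum, pairProd, filter_singleton]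
  | succ h ih =>
    induction N with
    | zero =>
      rw [paritySum_zero_zero x hx hx1 (2 * h) s (by omega), pairSum]
    | succ N ihN =>
      rw [pairSum_succ_succ]
      simp only
      rw [ihN]
      have e : divAlt x (N + 1) (divAlt x N (pairSum x h N)) s =
          divAlt x (N + 1) (divAlt x N (paritySum x 0 N)) s := by
        refine divAlt_congr x _ fun i hi => divAlt_congr x _ fun j hj => ih N _ ?_
        rw [card_erase_of_mem hj, card_erase_of_mem hi]
        omega
      rw [e, divAlt_paritySum_even h2 x hx hx1, divAlt_paritySum_odd h2 x hx hx1]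
      ring

/-- The alternant with exponents `e`, divided by the Vandermonde product. -/
def altQuot {ι K : Type*} [DecidableEq ι] [Field K] (x : ι → K) :
    (n : ℕ) → (Fin n → ℕ) → Finset ι → K
  | 0, _ => fun _ => 1
  | n + 1, e => divAlt x (e 0) (altQuot x n (Fin.tail e))

open Finset in
theorem pairProd_sub_succAbove {R : Type*} [CommRing R] (n : ℕ) (y : Fin (n + 1) → R)
    (p : Fin (n + 1)) :
    pairProd (fun i j => y i - y j) univ =
      (-1) ^ (p : ℕ) * (∏ b, (y p - y (p.succAbove b))) *
        pairProd (fun i j => y (p.succAbove i) - y (p.succAbove j)) univ := by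
  simp only [pairProd, prod_filter]
  rw [Fin.prod_univ_succAbove _ p]
  simp only [Fin.prod_univ_succAbove _ p, lt_irrefl, if_false, one_mul,
    Fin.succAbove_lt_succAbove_iff]
  rw [prod_mul_distrib, ← mul_assoc, ← prod_mul_distrib]
  congr 1
  have e : ∀ b : Fin n, ((if p < p.succAbove b then y p - y (p.succAbove b) else 1) *
      if p.succAbove b < p then y (p.succAbove b) - y p else 1) =
      (if b.castSucc < p then -1 else 1) * (y p - y (p.succAbove b)) := by
    intro b
    simp only [← Fin.succAbove_lt_iff_castSucc_lt]
    rcases lt_or_gt_of_ne (Fin.succAbove_ne p b) with h | h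
    · simp [h, h.not_gt]
    · simp [h, h.not_gt]
  rw [prod_congr rfl fun b _ => e b, prod_mul_distrib]
  congr 1
  rw [prod_ite]
  simp only [prod_const, one_pow, mul_one]
  congr 1
  have : (univ.filter fun b : Fin n => b.castSucc < p).map Fin.castSuccEmb = Iio p := by
    ext a
    simp only [mem_map, mem_filter, mem_univ, true_and, mem_Iio]
    constructor
    · rintro ⟨b, hb, rfl⟩
      exact hb
    · intro h
      exact ⟨a.castLT (lt_of_lt_of_le h (Nat.lt_succ_iff.1 p.2)), h, rfl⟩
  rw [← card_map Fin.castSuccEmb, this, Fin.card_Iio]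

open Finset in
theorem det_pow_eq_mul_altQuot {ι K : Type*} [DecidableEq ι] [Field K] (x : ι → K)
    (hx : Function.Injective x) (n : ℕ) (e : Fin n → ℕ) (f : Fin n ↪ ι) :
    Matrix.det (Matrix.of fun i j : Fin n => x (f i) ^ e j) =
      pairProd (fun i j => x (f i) - x (f j)) univ * altQuot x n e (univ.map f) := by
  induction n with
  | zero => simp [pairProd, altQuot]
  | succ n ih =>
    rw [Matrix.det_succ_column_zero, altQuot, divAlt, sum_map, mul_sum]
    refine sum_congr rfl fun p _ => ?_
    have himg : (univ.map f).erase (f p) = univ.map (p.succAboveEmb.trans f) := by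
      rw [← map_erase, ← map_map]
      congr 1
      ext a
      simp [← Fin.exists_succAbove_eq_iff]
    have hsub : (Matrix.of fun i j => x (f i) ^ e j).submatrix p.succAbove Fin.succ =
        Matrix.of fun i j : Fin n =>
          x (p.succAboveEmb.trans f i) ^ Fin.tail e j := by
      ext i j
      rfl
    rw [hsub, ih, himg, prod_map, pairProd_sub_succAbove n (fun i => x (f i)) p]
    have hne : ∏ b, (x (f p) - x (f (p.succAbove b))) ≠ 0 := prod_ne_zero_iff.2 fun b _ =>
      sub_ne_zero.2 ((hx.comp f.injective).ne (Fin.succAbove_ne p b).symm)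
    simp only [Matrix.of_apply, Function.Embedding.trans_apply, Fin.coe_succAboveEmb]
    field_simp

open Finset in
/-- The partitions with at most `n` parts, all at most `m`, whose conjugate has even parts. -/
noncomputable def evenColumnPartitions (m n : ℕ) : Finset (Fin n → ℕ) :=
  {l ∈ Fintype.piFinset fun _ => range (m + 1) |
    Antitone l ∧ ∀ c, 1 ≤ c → Even #{i | c ≤ l i}}

open Finset in
theorem mem_evenColumnPartitions {m n : ℕ} {l : Fin n → ℕ} :
    l ∈ evenColumnPartitions m n ↔
      (∀ i, l i ≤ m) ∧ Antitone l ∧ ∀ c, 1 ≤ c → Even #{i | c ≤ l i} := by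
  simp [evenColumnPartitions]

theorem evenColumnPartitions_zero_right (m : ℕ) : evenColumnPartitions m 0 = {0} := by
  ext l
  have : l = 0 := Subsingleton.elim _ _
  subst this
  simp [mem_evenColumnPartitions, Subsingleton.antitone]

theorem evenColumnPartitions_zero_left (n : ℕ) : evenColumnPartitions 0 n = {0} := by
  ext l
  simp only [mem_evenColumnPartitions, Finset.mem_singleton]
  constructor
  · intro h
    funext i
    exact Nat.le_zero.1 (h.1 i)
  · rintro rfl
    refine ⟨fun i => le_rfl, antitone_const, fun c hc => ?_⟩
    rw [Finset.filter_false_of_mem]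
    · simp
    · intro i _
      simpa using by omega

open Finset in
theorem card_filter_le_cons {n : ℕ} (a c : ℕ) (l : Fin n → ℕ) :
    #{i | c ≤ (Fin.cons a l : Fin (n + 1) → ℕ) i} = #{i | c ≤ l i} + if c ≤ a then 1 else 0 := by
  simp only [card_filter]
  rw [Fin.sum_univ_succ]
  simp [add_comm]

theorem antitone_cons_iff {n : ℕ} (a : ℕ) (l : Fin n → ℕ) :
    Antitone (Fin.cons a l : Fin (n + 1) → ℕ) ↔ (∀ i, l i ≤ a) ∧ Antitone l := by
  constructor
  · intro h
    refine ⟨fun i => ?_, fun i j hij => ?_⟩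
    · simpa using h (Fin.zero_le i.succ)
    · simpa using h (Fin.succ_le_succ_iff.2 hij)
  · rintro ⟨h1, h2⟩ i j hij
    induction i using Fin.cases with
    | zero =>
      induction j using Fin.cases with
      | zero => exact le_rfl
      | succ j => simpa using h1 j
    | succ i =>
      induction j using Fin.cases with
      | zero => exact absurd hij (by simp)
      | succ j => simpa using h2 (Fin.succ_le_succ_iff.1 hij)

open Finset in
theorem cons_cons_mem_evenColumnPartitions {m n : ℕ} {l : Fin n → ℕ} :
    (Fin.cons (m + 1) (Fin.cons (m + 1) l : Fin (n + 1) → ℕ) : Fin (n + 2) → ℕ) ∈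
      evenColumnPartitions (m + 1) (n + 2) ↔ l ∈ evenColumnPartitions (m + 1) n := by
  simp only [mem_evenColumnPartitions, card_filter_le_cons, antitone_cons_iff, Fin.forall_fin_succ,
    Fin.cons_zero, Fin.cons_succ, le_refl, true_and]
  constructor
  · rintro ⟨h1, h2, h3⟩
    refine ⟨h1, h2.2.2, fun c hc => ?_⟩
    have := h3 c hc
    rw [Nat.even_iff] at this ⊢
    split_ifs at this <;> omega
  · rintro ⟨h1, h2, h3⟩
    refine ⟨h1, ⟨h1, h1, h2⟩, fun c hc => ?_⟩
    have := h3 c hc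
    rw [Nat.even_iff] at this ⊢
    split_ifs <;> omega

open Finset in
theorem exists_eq_cons_cons {m n : ℕ} {l : Fin (n + 2) → ℕ}
    (hl : l ∈ evenColumnPartitions (m + 1) (n + 2)) (h0 : l 0 = m + 1) :
    ∃ l' : Fin n → ℕ, l = Fin.cons (m + 1) (Fin.cons (m + 1) l' : Fin (n + 1) → ℕ) := by
  rw [mem_evenColumnPartitions] at hl
  obtain ⟨h1, h2, h3⟩ := hl
  have h4 : l 1 = m + 1 := by
    by_contra h5
    have h6 : ({i | m + 1 ≤ l i} : Finset (Fin (n + 2))) = {0} := by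
      ext i
      simp only [mem_filter, mem_univ, true_and, mem_singleton]
      constructor
      · intro hi
        by_contra hi0
        have : l i ≤ l 1 := h2 (Fin.one_le_of_ne_zero hi0)
        have := h1 1
        omega
      · rintro rfl
        exact h0.ge
    have := h3 (m + 1) (by omega)
    rw [h6, card_singleton] at this
    exact absurd this (by decide)
  refine ⟨fun i => l i.succ.succ, ?_⟩
  funext i
  induction i using Fin.cases with
  | zero => exact h0
  | succ i =>
    induction i using Fin.cases with
    | zero => exact h4
    | succ i => rfl

open Finset in
theorem sum_evenColumnPartitions_succ {M : Type*} [AddCommMonoid M] (m n : ℕ)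
    (F : (Fin (n + 2) → ℕ) → M) :
    ∑ l ∈ evenColumnPartitions (m + 1) (n + 2), F l =
      ∑ l ∈ evenColumnPartitions m (n + 2), F l +
        ∑ l ∈ evenColumnPartitions (m + 1) n,
          F (Fin.cons (m + 1) (Fin.cons (m + 1) l : Fin (n + 1) → ℕ)) := by
  rw [← sum_filter_not_add_sum_filter (evenColumnPartitions (m + 1) (n + 2))
    (fun l => l 0 = m + 1)]
  congr 1
  · refine sum_congr ?_ fun _ _ => rfl
    ext l
    simp only [mem_filter, mem_evenColumnPartitions]
    constructor
    · rintro ⟨⟨h1, h2, h3⟩, h0⟩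
      refine ⟨fun i => ?_, h2, h3⟩
      have := h2 (Fin.zero_le i)
      have := h1 0
      omega
    · rintro ⟨h1, h2, h3⟩
      refine ⟨⟨fun i => (h1 i).trans (Nat.le_succ m), h2, h3⟩, ?_⟩
      have := h1 0
      omega
  · symm
    refine sum_bij (fun l _ => Fin.cons (m + 1) (Fin.cons (m + 1) l : Fin (n + 1) → ℕ))
      ?_ ?_ ?_ ?_
    · intro l hl
      exact mem_filter.2 ⟨cons_cons_mem_evenColumnPartitions.2 hl, rfl⟩
    · intro l _ l' _ h
      exact Fin.cons_right_injective _ (Fin.cons_right_injective _ h)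
    · intro l hl
      obtain ⟨hl, h0⟩ := mem_filter.1 hl
      obtain ⟨l', rfl⟩ := exists_eq_cons_cons hl h0
      exact ⟨l', cons_cons_mem_evenColumnPartitions.1 hl, rfl⟩
    · intro l _
      rfl

theorem altQuot_add_two {ι K : Type*} [DecidableEq ι] [Field K] (x : ι → K) (n : ℕ)
    (e : Fin (n + 2) → ℕ) :
    altQuot x (n + 2) e =
      divAlt x (e 0) (divAlt x (e 1) (altQuot x n fun j => e j.succ.succ)) := rfl

open Finset in
theorem sum_altQuot_eq_pairSum {ι K : Type*} [DecidableEq ι] [Field K] (x : ι → K) (h m : ℕ)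
    (s : Finset ι) :
    ∑ l ∈ evenColumnPartitions m (2 * h), altQuot x (2 * h) (fun j => l j + (2 * h - 1 - j)) s =
      pairSum x h (m + 2 * h - 1) s := by
  induction h generalizing m s with
  | zero =>
    simp only [Nat.mul_zero, evenColumnPartitions_zero_right, sum_singleton, pairSum_zero]
    rfl
  | succ h ih =>
    change ∑ l ∈ evenColumnPartitions m (2 * h + 2),
      altQuot x (2 * h + 2) (fun j => l j + (2 * h + 2 - 1 - j)) s =
        pairSum x (h + 1) (m + (2 * h + 2) - 1) s
    induction m with
    | zero =>
      rw [evenColumnPartitions_zero_left, sum_singleton, altQuot_add_two,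
        show 0 + (2 * h + 2) - 1 = 2 * h + 1 by omega, pairSum_succ_succ,
        pairSum_eq_zero x h (2 * h) le_rfl, divAlt_pairSum_pred]
      have e : (altQuot x (2 * h) fun j => (0 : Fin (2 * h + 2) → ℕ) j.succ.succ +
          (2 * h + 2 - 1 - (j.succ.succ : Fin (2 * h + 2)))) = pairSum x h (2 * h - 1) := by
        funext t
        have := ih 0 t
        rw [evenColumnPartitions_zero_left, sum_singleton, zero_add] at this
        rw [← this]
        congr 1
        funext j
        simp
        omega
      rw [e]
      simp
    | succ m ihm =>
      rw [sum_evenColumnPartitions_succ, ihm,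
        show m + 1 + (2 * h + 2) - 1 = m + (2 * h + 2) - 1 + 1 by omega, pairSum_succ_succ]
      simp only
      congr 1
      rw [divAlt_pairSum_pred]
      have e : pairSum x h (m + (2 * h + 2) - 1 - 1) = fun t =>
          ∑ l ∈ evenColumnPartitions (m + 1) (2 * h),
            altQuot x (2 * h) (fun j => l j + (2 * h - 1 - j)) t := by
        funext t
        rw [ih (m + 1) t]
        congr 1
        omega
      have e' : divAlt x (m + (2 * h + 2) - 1) (pairSum x h (m + (2 * h + 2) - 1 - 1)) = fun t =>
          ∑ l ∈ evenColumnPartitions (m + 1) (2 * h), divAlt x (m + (2 * h + 2) - 1)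
            (altQuot x (2 * h) (fun j => l j + (2 * h - 1 - j))) t := by
        funext t
        rw [e, divAlt_sum]
      rw [e', divAlt_sum]
      refine sum_congr rfl fun l _ => ?_
      rw [altQuot_add_two]
      have a0 : (Fin.cons (m + 1) (Fin.cons (m + 1) l : Fin (2 * h + 1) → ℕ) :
          Fin (2 * h + 2) → ℕ) 0 + (2 * h + 2 - 1 - ((0 : Fin (2 * h + 2)) : ℕ)) =
          m + (2 * h + 2) - 1 + 1 := by
        simp
        omega
      have a1 : (Fin.cons (m + 1) (Fin.cons (m + 1) l : Fin (2 * h + 1) → ℕ) :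
          Fin (2 * h + 2) → ℕ) 1 + (2 * h + 2 - 1 - ((1 : Fin (2 * h + 2)) : ℕ)) =
          m + (2 * h + 2) - 1 := by
        change m + 1 + (2 * h + 2 - 1 - 1) = _
        omega
      rw [a0, a1]
      congr 3
      funext j
      simp
      omega

open Finset in
theorem okada_identity_field {K : Type*} [Field K] (h2 : (2 : K) ≠ 0) (m n : ℕ) (hn : 0 < n)
    (hneven : Even n) (x : Fin n → K) (hx : Function.Injective x) (hx1 : ∀ i j, x i * x j ≠ 1) :
    (∑ l ∈ evenColumnPartitions m n,
        Matrix.det (Matrix.of fun i j : Fin n => x i ^ (l j + (n - 1 - (j : ℕ))))) *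
      pairProd (fun i j => x i * x j - 1) univ =
    ∑ σ : Equiv.Perm (Fin n), ∑ S : Finset (Fin n) with Even #S,
      ((Equiv.Perm.sign σ : ℤ) : K) *
        ((∏ i ∈ S, x i ^ (m + 2 * n - 2 - (σ i : ℕ))) * ∏ i ∈ Sᶜ, x i ^ (σ i : ℕ)) := by
  obtain ⟨h, rfl⟩ := hneven.two_dvd
  have hdet : ∀ l : Fin (2 * h) → ℕ,
      Matrix.det (Matrix.of fun i j : Fin (2 * h) => x i ^ (l j + (2 * h - 1 - (j : ℕ)))) =
        pairProd (fun i j => x i - x j) univ *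
          altQuot x (2 * h) (fun j => l j + (2 * h - 1 - (j : ℕ))) univ := by
    intro l
    have := det_pow_eq_mul_altQuot x hx (2 * h) (fun j => l j + (2 * h - 1 - (j : ℕ)))
      (Function.Embedding.refl _)
    rwa [map_refl] at this
  simp only [hdet]
  rw [← mul_sum, sum_altQuot_eq_pairSum, pairSum_eq_paritySum h2 x hx hx1 _ _ _ (by simp),
    mul_right_comm, ← pairProd_mul, ← sum_sign_mul_prod_eq_mul_paritySum _ _ x hx hx1]
  refine sum_congr rfl fun σ _ => sum_congr rfl fun S _ => ?_
  congr 2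
  refine prod_congr rfl fun i _ => ?_
  congr 1
  have := (σ i).2
  omega

open Finset in
theorem sum_filter_fin_eq_sum_evenColumnPartitions {M : Type*} [AddCommMonoid M] (m n : ℕ)
    (F : (Fin n → ℕ) → M) :
    ∑ l ∈ Finset.univ.filter
        (fun l : Fin n → Fin (m + 1) =>
          (∀ i j : Fin n, i ≤ j → (l j : ℕ) ≤ (l i : ℕ)) ∧
            ∀ c : ℕ, 1 ≤ c →
              Even (Finset.univ.filter (fun i : Fin n => c ≤ (l i : ℕ))).card),
      F (fun j => (l j : ℕ)) = ∑ l ∈ evenColumnPartitions m n, F l := by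
  refine sum_bij (fun l _ j => (l j : ℕ)) ?_ ?_ ?_ ?_
  · intro l hl
    obtain ⟨-, h1, h2⟩ := mem_filter.1 hl
    exact mem_evenColumnPartitions.2 ⟨fun i => Nat.lt_succ_iff.1 (l i).2, fun i j hij => h1 i j hij, h2⟩
  · intro l _ l' _ h
    funext j
    exact Fin.ext (congrFun h j)
  · intro l hl
    obtain ⟨h1, h2, h3⟩ := mem_evenColumnPartitions.1 hl
    exact ⟨fun j => ⟨l j, Nat.lt_succ_iff.2 (h1 j)⟩,
      mem_filter.2 ⟨mem_univ _, fun i j hij => h2 hij, h3⟩, rfl⟩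
  · intro l _
    rfl

theorem map_det_pow {A B : Type*} [CommRing A] [CommRing B] (φ : A →+* B) {n : ℕ} (y : Fin n → A)
    (e : Fin n → ℕ) :
    φ (Matrix.det (Matrix.of fun i j : Fin n => y i ^ e j)) =
      Matrix.det (Matrix.of fun i j : Fin n => φ (y i) ^ e j) := by
  rw [RingHom.map_det]
  congr 1
  ext i j
  simp

open Finset in
theorem okada_identity_of_injective {A K : Type*} [CommRing A] [Field K] (φ : A →+* K)
    (hφ : Function.Injective φ) (h2 : (2 : A) ≠ 0) (m n : ℕ) (hn : 0 < n) (hneven : Even n)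
    (y : Fin n → A) (hy : Function.Injective y) (hy1 : ∀ i j, y i * y j ≠ 1) :
    (∑ l ∈ evenColumnPartitions m n,
        Matrix.det (Matrix.of fun i j : Fin n => y i ^ (l j + (n - 1 - (j : ℕ))))) *
      pairProd (fun i j => y i * y j - 1) univ =
    ∑ σ : Equiv.Perm (Fin n), ∑ S : Finset (Fin n) with Even #S,
      ((Equiv.Perm.sign σ : ℤ) : A) *
        ((∏ i ∈ S, y i ^ (m + 2 * n - 2 - (σ i : ℕ))) * ∏ i ∈ Sᶜ, y i ^ (σ i : ℕ)) := by
  have h2' : (2 : K) ≠ 0 := by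
    rw [← map_ofNat φ 2]
    exact (map_ne_zero_iff φ hφ).2 h2
  have h := okada_identity_field h2' m n hn hneven (fun i => φ (y i)) (hφ.comp hy)
    (fun i j h => hy1 i j (hφ (by rw [map_mul, h, map_one])))
  apply hφ
  simp only [pairProd] at h ⊢
  simpa only [map_mul, map_sum, map_prod, map_pow, map_sub, map_one, map_intCast, map_det_pow]
    using h

open Finset in
theorem okada_identity_mvPolynomial (m n : ℕ) (hn : 0 < n) (hneven : Even n) :
    (∑ l ∈ evenColumnPartitions m n, Matrix.det (Matrix.of fun i j : Fin n =>
        (MvPolynomial.X i : MvPolynomial (Fin n) ℤ) ^ (l j + (n - 1 - (j : ℕ))))) *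
      pairProd (fun i j => MvPolynomial.X i * MvPolynomial.X j - 1) univ =
    ∑ σ : Equiv.Perm (Fin n), ∑ S : Finset (Fin n) with Even #S,
      ((Equiv.Perm.sign σ : ℤ) : MvPolynomial (Fin n) ℤ) *
        ((∏ i ∈ S, MvPolynomial.X i ^ (m + 2 * n - 2 - (σ i : ℕ))) *
          ∏ i ∈ Sᶜ, MvPolynomial.X i ^ (σ i : ℕ)) := by
  refine okada_identity_of_injective (algebraMap _ (FractionRing (MvPolynomial (Fin n) ℤ)))
    (IsFractionRing.injective _ _) two_ne_zero m n hn hneven _ MvPolynomial.X_injective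
    fun i j h => ?_
  have := congrArg (MvPolynomial.eval (fun _ => (0 : ℤ))) h
  simp at this

/-- **Okada's identity** (Theorem III), with denominators cleared.
Partitions `λ ⊆ {m^n}` whose conjugate is even (i.e. `#{i : λ_i ≥ c}` is even for all
`c ≥ 1`) are encoded as antitone functions `Fin n → Fin (m+1)` with the corresponding
parity condition.  On the right, `σ(i)` and the elements of `{1,…,n}` are 0-indexed, so
`x_i^{m+2n-1-σ(i)}` becomes `x i ^ (m + 2*n - 2 - σ i)` and `x_i^{σ(i)-1}` becomes
`x i ^ (σ i)`; `(-1)^{inv σ}` is the sign of the permutation `σ`. -/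
theorem okada_identity (m n : ℕ) (hm : 0 < m) (hn : 0 < n) (hneven : Even n)
    (R : Type*) [CommRing R] (x : Fin n → R) :
    (∑ l ∈ Finset.univ.filter
        (fun l : Fin n → Fin (m + 1) =>
          (∀ i j : Fin n, i ≤ j → (l j : ℕ) ≤ (l i : ℕ)) ∧
            ∀ c : ℕ, 1 ≤ c →
              Even (Finset.univ.filter (fun i : Fin n => c ≤ (l i : ℕ))).card),
        Matrix.det (Matrix.of fun i j : Fin n => x i ^ ((l j : ℕ) + (n - 1 - (j : ℕ))))) *
      (∏ i : Fin n, ∏ j ∈ Finset.Ioi i, (x i * x j - 1)) =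
    ∑ σ : Equiv.Perm (Fin n),
      ∑ S ∈ Finset.univ.filter (fun S : Finset (Fin n) => Even S.card),
        ((Equiv.Perm.sign σ : ℤ) : R) *
          ((∏ i ∈ S, x i ^ (m + 2 * n - 2 - (σ i : ℕ))) *
            ∏ i ∈ Sᶜ, x i ^ (σ i : ℕ)) := by
  rw [sum_filter_fin_eq_sum_evenColumnPartitions m n fun l =>
    Matrix.det (Matrix.of fun i j : Fin n => x i ^ (l j + (n - 1 - (j : ℕ))))]
  have h := congrArg (MvPolynomial.eval₂Hom (Int.castRingHom R) x)
    (okada_identity_mvPolynomial m n hn hneven)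
  simp only [pairProd, Finset.filter_lt_eq_Ioi, map_mul, map_sum, map_prod, map_pow, map_sub,
    map_one, map_intCast, map_det_pow, MvPolynomial.coe_eval₂Hom, MvPolynomial.eval₂_X] at h
  exact h
end

section
/- Let F be a field, n a positive integer, t, v ∈ F, and x_1, …, x_n nonzero pairwise distinct elements of F. Then x_1⋯x_n · ∑_{k=1}^n x_k^{−1} (1 − t x_k)(1 − v x_k) ∏_{i=1, i≠k}^n (1 − x_i x_k)/(x_i − x_k) equals (1 − t x_1⋯x_n)(1 − v x_1⋯x_n) if n is odd, and equals (1 − x_1⋯x_n)(1 − t v x_1⋯x_n) if n is even. -/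
open Polynomial in
/-- Partial fractions of `(1 - t z) (1 - v z) ∏ (1 - i z)` over the nodes `y`, `0`, `1` and `s`:
the leading coefficient is the sum of the residues. -/
lemma sum_residues_eq_leadingCoeff {F : Type*} [Field F] [DecidableEq F] (t v : F) {s : Finset F}
    {y : F} (h0 : 0 ∉ s) (h1 : 1 ∉ s) (hy : y ∉ s) (hy0 : y ≠ 0) (hy1 : y ≠ 1) :
    t * v * ∏ i ∈ s, -i =
      (1 - t * y) * (1 - v * y) * (∏ i ∈ s, (1 - i * y)) / (y * ((y - 1) * ∏ i ∈ s, (y - i))) +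
      (1 / (y * ∏ i ∈ s, -i) + ((1 - t) * (1 - v) / (1 - y) +
      ∑ k ∈ s, (1 - t * k) * (1 - v * k) * (∏ i ∈ s, (1 - i * k)) /
        ((k - y) * (k * ((k - 1) * ∏ i ∈ s.erase k, (k - i)))))) := by
  have hlin : ∀ a : F, (1 - C a * X : F[X]).natDegree ≤ 1 := fun a ↦ by compute_degree
  have hprod : (∏ i ∈ s, (1 - C i * X : F[X])).natDegree ≤ s.card * 1 :=
    (natDegree_prod_le _ _).trans (Finset.sum_le_card_nsmul _ _ _ fun i _ ↦ hlin i)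
  have htv : ((1 - C t * X) * (1 - C v * X) : F[X]).natDegree ≤ 1 + 1 :=
    natDegree_mul_le_of_le (hlin t) (hlin v)
  have hdeg := natDegree_mul_le_of_le htv hprod
  have hcoeff : ∀ a : F, (1 - C a * X : F[X]).coeff 1 = -a := fun a ↦ by simp [coeff_one]
  have hlead := coeff_mul_add_eq_of_natDegree_le htv hprod
  rw [coeff_mul_add_eq_of_natDegree_le (hlin t) (hlin v),
    coeff_prod_of_natDegree_le _ _ _ fun i _ ↦ hlin i] at hlead
  simp only [hcoeff, neg_mul_neg] at hlead
  have h1' : (0 : F) ∉ insert 1 s := by simp [h0]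
  have hy' : y ∉ insert 0 (insert 1 s) := by simp [hy, hy0, hy1]
  have hcard : (insert y (insert 0 (insert 1 s))).card = s.card + 3 := by
    rw [Finset.card_insert_of_notMem hy', Finset.card_insert_of_notMem h1',
      Finset.card_insert_of_notMem h1]
  have key := Lagrange.coeff_eq_sum (s := insert y (insert 0 (insert 1 s))) (v := id)
    (Set.injOn_id _) (P := (1 - C t * X) * (1 - C v * X) * ∏ i ∈ s, (1 - C i * X))
    (lt_of_le_of_lt (degree_le_of_natDegree_le hdeg)
      (by rw [hcard]; exact_mod_cast (by omega)))
  rw [hcard, show s.card + 3 - 1 = 1 + 1 + s.card * 1 by omega, hlead,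
    Finset.sum_insert hy', Finset.sum_insert h1', Finset.sum_insert h1] at key
  rw [key]
  have hs1 : ∏ i ∈ s, (1 - i) ≠ 0 :=
    Finset.prod_ne_zero_iff.2 fun i hi h ↦ h1 (sub_eq_zero.1 h ▸ hi)
  congr 1
  · rw [Finset.erase_insert hy', Finset.prod_insert h1', Finset.prod_insert h1]
    simp [eval_prod]
  congr 1
  · rw [Finset.erase_insert_of_ne hy0, Finset.erase_insert h1',
      Finset.prod_insert (by simp [hy, hy1]), Finset.prod_insert h1]
    simp [eval_prod]
  congr 1
  · rw [Finset.erase_insert_of_ne hy1, Finset.erase_insert_of_ne zero_ne_one,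
      Finset.erase_insert h1, Finset.prod_insert (by simp [hy, hy0]), Finset.prod_insert h0]
    simp only [eval_mul, eval_sub, eval_one, eval_C, eval_X, eval_prod, id, mul_one, sub_zero,
      one_mul]
    exact mul_div_mul_right _ _ hs1
  · refine Finset.sum_congr rfl fun k hk ↦ ?_
    have hky : y ≠ k := fun h ↦ hy (h ▸ hk)
    have hk0 : 0 ≠ k := fun h ↦ h0 (h ▸ hk)
    have hk1 : 1 ≠ k := fun h ↦ h1 (h ▸ hk)
    rw [Finset.erase_insert_of_ne hky, Finset.erase_insert_of_ne hk0,
      Finset.erase_insert_of_ne hk1, Finset.prod_insert (by simp [hy, hy0, hy1]),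
      Finset.prod_insert (by simp [h0]), Finset.prod_insert (by simp [h1])]
    simp [eval_prod]

/-- Adjoining a node `y` to the sum over `s`. -/
lemma sum_prod_div_insert {F : Type*} [Field F] [DecidableEq F] (t v : F) {s : Finset F}
    {y : F} (h0 : 0 ∉ s) (h1 : 1 ∉ s) (hy : y ∉ s) (hy0 : y ≠ 0) :
    ∑ k ∈ insert y s, k⁻¹ * (1 - t * k) * (1 - v * k) *
        ∏ i ∈ (insert y s).erase k, (1 - i * k) / (i - k) =
      ∑ k ∈ s, k⁻¹ * (1 - t * k) * (1 - v * k) * ∏ i ∈ s.erase k, (1 - i * k) / (i - k) +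
        (-1) ^ s.card * (1 - t) * (1 - v) +
        (y - 1) * (t * v * ∏ i ∈ s, i - (y * ∏ i ∈ s, i)⁻¹) := by
  have hstep : ∀ k ∈ s, ∏ i ∈ (insert y s).erase k, (1 - i * k) / (i - k) =
      (1 - y * k) / (y - k) * ∏ i ∈ s.erase k, (1 - i * k) / (i - k) := fun k hk ↦ by
    rw [Finset.erase_insert_of_ne (by rintro rfl; exact hy hk), Finset.prod_insert (by simp [hy])]
  rw [Finset.sum_insert hy, Finset.erase_insert hy,
    Finset.sum_congr rfl fun k hk ↦ by rw [hstep k hk]]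
  by_cases hy1 : y = 1
  · subst hy1
    have hone : ∏ i ∈ s, (1 - i * 1) / (i - 1) = (-1) ^ s.card := by
      refine Finset.prod_eq_pow_card fun i hi ↦ ?_
      have : i - 1 ≠ 0 := fun h ↦ h1 (sub_eq_zero.1 h ▸ hi)
      field_simp
      ring
    have hcancel : ∀ k ∈ s, (1 - 1 * k) / (1 - k) = 1 := fun k hk ↦ by
      rw [one_mul, div_self (sub_ne_zero.2 (by rintro rfl; exact h1 hk))]
    rw [hone, Finset.sum_congr rfl fun k hk ↦ by rw [hcancel k hk, one_mul]]
    simp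
    ring
  have key := sum_residues_eq_leadingCoeff t v h0 h1 hy hy0 hy1
  have hy1' : y - 1 ≠ 0 := sub_ne_zero.2 hy1
  obtain ⟨e, he⟩ : ∃ e : F, e = (-1) ^ s.card := ⟨_, rfl⟩
  have hee : e * e = 1 := by rw [he, ← mul_pow]; simp
  have he0 : e ≠ 0 := left_ne_zero_of_mul_eq_one hee
  have hterm : ∀ k ∈ s, k⁻¹ * (1 - t * k) * (1 - v * k) *
      ((1 - y * k) / (y - k) * ∏ i ∈ s.erase k, (1 - i * k) / (i - k)) =
      k⁻¹ * (1 - t * k) * (1 - v * k) * ∏ i ∈ s.erase k, (1 - i * k) / (i - k) +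
      e * (y - 1) * ((1 - t * k) * (1 - v * k) * (∏ i ∈ s, (1 - i * k)) /
        ((k - y) * (k * ((k - 1) * ∏ i ∈ s.erase k, (k - i))))) := fun k hk ↦ by
    have hk0 : k ≠ 0 := fun h ↦ h0 (h ▸ hk)
    have hk1 : k - 1 ≠ 0 := fun h ↦ h1 (sub_eq_zero.1 h ▸ hk)
    have hky : y - k ≠ 0 := fun h ↦ hy (sub_eq_zero.1 h ▸ hk)
    have hD : ∏ i ∈ s.erase k, (i - k) ≠ 0 :=
      Finset.prod_ne_zero_iff.2 fun i hi ↦ sub_ne_zero.2 (Finset.ne_of_mem_erase hi)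
    have hsign : ∏ i ∈ s.erase k, (k - i) = -e * ∏ i ∈ s.erase k, (i - k) := by
      rw [he, ← Finset.card_erase_add_one hk, pow_succ, mul_neg_one, neg_neg, ← Finset.prod_neg]
      simp
    rw [hsign, ← Finset.mul_prod_erase s _ hk, Finset.prod_div_distrib]
    rw [show k - y = -(y - k) by ring]
    field_simp
    ring
  rw [Finset.sum_congr rfl hterm, Finset.sum_add_distrib, ← Finset.mul_sum]
  have hp : ∏ i ∈ s, i ≠ 0 := Finset.prod_ne_zero_iff.2 fun i hi h ↦ h0 (h ▸ hi)
  have hD : ∏ i ∈ s, (i - y) ≠ 0 :=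
    Finset.prod_ne_zero_iff.2 fun i hi h ↦ hy ((sub_eq_zero.1 h) ▸ hi)
  have hsign : ∏ i ∈ s, (y - i) = e * ∏ i ∈ s, (i - y) := by
    rw [he, ← Finset.prod_neg]
    simp
  rw [Finset.prod_neg, ← he, hsign] at key
  rw [← he, Finset.prod_div_distrib]
  generalize (∑ k ∈ s, (1 - t * k) * (1 - v * k) * (∏ i ∈ s, (1 - i * k)) /
        ((k - y) * (k * ((k - 1) * ∏ i ∈ s.erase k, (k - i))))) = S at key ⊢
  generalize (∏ i ∈ s, i) = p at *
  generalize (∏ i ∈ s, (i - y)) = d at *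
  generalize (∏ i ∈ s, (1 - i * y)) = q at *
  have hS : S = t * v * (e * p) - (1 - t * y) * (1 - v * y) * q / (y * ((y - 1) * (e * d))) -
      1 / (y * (e * p)) + (1 - t) * (1 - v) / (y - 1) := by
    rw [key, show 1 - y = -(y - 1) by ring, div_neg]
    ring
  rw [hS]
  field_simp
  linear_combination (y * (y - 1) * p ^ 2 * d * t * v) * hee

lemma prod_mul_sum_prod_div {F : Type*} [Field F] [DecidableEq F] (t v : F) (s : Finset F)
    (h0 : 0 ∉ s) :
    (∏ i ∈ s, i) * ∑ k ∈ s, k⁻¹ * (1 - t * k) * (1 - v * k) *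
        ∏ i ∈ s.erase k, (1 - i * k) / (i - k) =
      if Odd s.card then (1 - t * ∏ i ∈ s, i) * (1 - v * ∏ i ∈ s, i)
      else (1 - ∏ i ∈ s, i) * (1 - t * v * ∏ i ∈ s, i) := by
  induction s using Finset.strongInduction with
  | H s ih =>
    obtain rfl | hs := s.eq_empty_or_nonempty
    · simp
    obtain ⟨y, hys, h1⟩ : ∃ y ∈ s, 1 ∉ s.erase y := by
      by_cases h : 1 ∈ s
      · exact ⟨1, h, by simp⟩
      · exact ⟨_, hs.choose_spec, by simp [h]⟩
    have ih' := ih _ (Finset.erase_ssubset hys) (by simp [h0])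
    have hy0 : y ≠ 0 := fun h ↦ h0 (h ▸ hys)
    obtain ⟨r, hr⟩ : ∃ r, r = s.erase y := ⟨_, rfl⟩
    have hyr : y ∉ r := by simp [hr]
    have h0r : 0 ∉ r := by simp [hr, h0]
    obtain rfl : s = insert y r := by rw [hr, Finset.insert_erase hys]
    rw [← hr] at h1 ih'
    have hp : ∏ i ∈ r, i ≠ 0 := Finset.prod_ne_zero_iff.2 fun i hi h ↦ h0r (h ▸ hi)
    rw [sum_prod_div_insert t v h0r h1 hyr hy0, Finset.prod_insert hyr,
      Finset.card_insert_of_notMem hyr, mul_add, mul_add, mul_assoc y, ih']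
    rcases Nat.even_or_odd r.card with h | h
    · rw [if_neg (Nat.not_odd_iff_even.2 h), if_pos h.add_one, h.neg_one_pow]
      field_simp
      ring
    · rw [if_pos h, if_neg (Nat.not_odd_iff_even.2 h.add_one), h.neg_one_pow]
      field_simp
      ring

/-- **Lemma 1** of the paper.  For nonzero pairwise distinct `x 1, …, x n` in a field `F`
and arbitrary `t, v ∈ F`,
`x_1⋯x_n ∑_k x_k⁻¹ (1-t x_k)(1-v x_k) ∏_{i≠k} (1-x_i x_k)/(x_i-x_k)` equals
`(1-t x_1⋯x_n)(1-v x_1⋯x_n)` for `n` odd and `(1-x_1⋯x_n)(1-t v x_1⋯x_n)` for `n` even. -/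
theorem lemma_one (F : Type*) [Field F] (n : ℕ) (hn : 0 < n) (t v : F)
    (x : Fin n → F) (hx0 : ∀ i, x i ≠ 0) (hxinj : Function.Injective x) :
    (∏ i : Fin n, x i) *
      ∑ k : Fin n, (x k)⁻¹ * (1 - t * x k) * (1 - v * x k) *
        ∏ i ∈ Finset.univ.erase k, (1 - x i * x k) / (x i - x k) =
    if Odd n then (1 - t * ∏ i : Fin n, x i) * (1 - v * ∏ i : Fin n, x i)
    else (1 - ∏ i : Fin n, x i) * (1 - t * v * ∏ i : Fin n, x i) := by
  classical
  have h := prod_mul_sum_prod_div t v (Finset.univ.map ⟨x, hxinj⟩) (by simp [hx0])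
  have herase : ∀ k, (Finset.univ.map ⟨x, hxinj⟩).erase (x k) =
      (Finset.univ.erase k).map ⟨x, hxinj⟩ := fun k ↦ (Finset.map_erase ⟨x, hxinj⟩ _ k).symm
  simpa only [Finset.sum_map, Finset.prod_map, Function.Embedding.coeFn_mk, herase,
    Finset.card_map, Finset.card_univ, Fintype.card_fin] using h
end

section
/- For every positive integer n, the following identity holds in the formal power series ring ℚ[[x_1, …, x_n]]: ∑_{λ, all λ_j even} det((x_i^{λ_j + n − j})_{1≤i,j≤n}) · ∏_{i=1}^n (1 − x_i^2) · ∏_{1 ≤ i < j ≤ n} (1 − x_i x_j) = ∏_{1 ≤ i < j ≤ n} (x_i − x_j), where the sum is over all partitions λ = (λ_1 ≥ ⋯ ≥ λ_n ≥ 0) with at most n parts, all of which are even (the family is summable, since for each monomial only finitely many λ contribute). Equivalently (Littlewood): ∑_{λ even} s_λ(x_1,…,x_n) = ∏_i 1/(1 − x_i^2) · ∏_{i<j} 1/(1 − x_i x_j). -/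
open Finset

theorem prod_prod_Ioi_eq_succAbove {M : Type*} [CommMonoid M] {n : ℕ}
    (f : Fin (n + 1) → Fin (n + 1) → M) (hf : ∀ i j, f i j = f j i) (r : Fin (n + 1)) :
    ∏ i, ∏ j ∈ Ioi i, f i j =
      (∏ i : Fin n, f r (r.succAbove i)) *
        ∏ i : Fin n, ∏ j ∈ Ioi i, f (r.succAbove i) (r.succAbove j) := by
  have key {m : ℕ} (g : Fin m → Fin m → M) :
      ∏ i, ∏ j ∈ Ioi i, g i j = ∏ i, ∏ j, if i < j then g i j else 1 := by
    refine prod_congr rfl fun i _ => ?_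
    rw [← prod_filter]
    congr 1
    ext j
    simp
  rw [key, key, Fin.prod_univ_succAbove _ r, Fin.prod_univ_succAbove _ r]
  simp only [lt_self_iff_false, if_false, one_mul]
  have split (i : Fin n) :
      (∏ j, if r.succAbove i < j then f (r.succAbove i) j else 1) =
        (if r.succAbove i < r then f (r.succAbove i) r else 1) *
          ∏ j, if i < j then f (r.succAbove i) (r.succAbove j) else 1 := by
    rw [Fin.prod_univ_succAbove _ r]
    simp only [Fin.succAbove_lt_succAbove_iff]
  simp only [split, prod_mul_distrib]
  rw [← mul_assoc, ← prod_mul_distrib]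
  congr 1
  refine prod_congr rfl fun i _ => ?_
  rcases lt_or_gt_of_ne (Fin.succAbove_ne r i) with h | h
  · simp [h, h.not_gt, hf]
  · simp [h, h.not_gt]

section Alternant

variable {R : Type*} [CommRing R] {n : ℕ}

/-- The bialternant numerator `det (x_i ^ (l_j + n - 1 - j))`. -/
noncomputable def alternant (x : Fin n → R) (l : Fin n → ℕ) : R :=
  Matrix.det (Matrix.of fun i j : Fin n => x i ^ (l j + (n - 1 - (j : ℕ))))

/-- The common denominator `∏ (1 - x_i ^ 2) * ∏_{i < j} (1 - x_i x_j)` in Littlewood's formula. -/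
noncomputable def littlewoodDenom (x : Fin n → R) : R :=
  (∏ i, (1 - x i ^ 2)) * ∏ i, ∏ j ∈ Ioi i, (1 - x i * x j)

theorem littlewoodDenom_eq_succAbove (x : Fin (n + 1) → R) (r : Fin (n + 1)) :
    littlewoodDenom x = (∏ i, (1 - x r * x i)) * littlewoodDenom (x ∘ r.succAbove) := by
  unfold littlewoodDenom
  rw [prod_prod_Ioi_eq_succAbove (fun i j => 1 - x i * x j) (fun i j => by rw [mul_comm]) r,
    Fin.prod_univ_succAbove _ r, Fin.prod_univ_succAbove (fun i => 1 - x r * x i) r]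
  simp only [Function.comp_apply]
  ring

theorem alternant_zero (x : Fin n → R) :
    alternant x 0 = ∏ i, ∏ j ∈ Ioi i, (x i - x j) := by
  have h := Matrix.det_projVandermonde (fun _ : Fin n => (1 : R)) x
  simp only [one_mul] at h
  rw [← h, alternant]
  congr 1
  ext i j
  simp only [Matrix.of_apply, Matrix.projVandermonde_apply, one_pow, one_mul, Fin.val_rev,
    Pi.zero_apply]
  congr 1
  omega

theorem prod_one_sub_mul_eq_sum (x : Fin (n + 1) → R) :
    ∃ c : Fin (n + 1) → R, c (Fin.last n) = 1 ∧ ∀ t : R,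
      ∏ k, (1 - t * x k) =
        ∑ j : Fin (n + 1), c j * t ^ (n - (j : ℕ)) + (-1) ^ (n + 1) * (∏ k, x k) * t ^ (n + 1) := by
  let p : Polynomial R := ∏ k, (1 - Polynomial.X * Polynomial.C (x k))
  have hfac : ∀ k, (1 - Polynomial.X * Polynomial.C (x k)).natDegree ≤ 1 := fun k => by
    compute_degree
  have hdeg : p.natDegree < n + 2 := by
    refine Nat.lt_succ_of_le ((Polynomial.natDegree_prod_le _ _).trans ?_)
    simpa using sum_le_sum fun k (_ : k ∈ univ) => hfac k
  refine ⟨fun j => p.coeff (n - (j : ℕ)), ?_, fun t => ?_⟩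
  · simp [p, Polynomial.coeff_zero_prod]
  have htop : p.coeff (n + 1) = (-1) ^ (n + 1) * ∏ k, x k := by
    have := Polynomial.coeff_prod_of_natDegree_le univ _ 1 fun k _ => hfac k
    rw [card_univ, Fintype.card_fin, mul_one] at this
    rw [this]
    simp [Polynomial.coeff_one, prod_neg]
  have heval : p.eval t = ∏ k, (1 - t * x k) := by simp [p, Polynomial.eval_prod, mul_comm t]
  rw [← heval, Polynomial.eval_eq_sum_range' hdeg, sum_range_succ, htop, ← sum_range_reflect,
    sum_range]
  simp [mul_comm]

theorem sum_prod_mul_alternant_zero_succAbove (x : Fin (n + 1) → R) :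
    ∑ r : Fin (n + 1), (-1) ^ ((r : ℕ) + n) * (∏ k, (1 - x r * x k)) *
        ((∏ i, x (r.succAbove i)) * alternant (x ∘ r.succAbove) 0) =
      (1 - (∏ k, x k) ^ 2) * alternant x 0 := by
  obtain ⟨c, hc, hprod⟩ := prod_one_sub_mul_eq_sum x
  let V : Matrix (Fin (n + 1)) (Fin (n + 1)) R := Matrix.of fun i j => x i ^ (n - (j : ℕ))
  have hV : alternant x 0 = V.det := by simp [alternant, V]
  have hexpand (b : Fin (n + 1) → R) : (V.updateCol (Fin.last n) b).det =
      ∑ r : Fin (n + 1), (-1) ^ ((r : ℕ) + n) * b r *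
        ((∏ i, x (r.succAbove i)) * alternant (x ∘ r.succAbove) 0) := by
    rw [Matrix.det_succ_column _ (Fin.last n)]
    refine sum_congr rfl fun r _ => ?_
    rw [alternant, ← Matrix.det_mul_column]
    simp only [Fin.val_last, Matrix.updateCol_self]
    congr 2
    ext i j
    simp only [Matrix.submatrix_apply, Fin.succAbove_last, Matrix.of_apply, Function.comp_apply]
    rw [Matrix.updateCol_ne (Fin.castSucc_lt_last j).ne]
    simp only [V, Matrix.of_apply, Pi.zero_apply, zero_add, ← pow_succ', Fin.val_castSucc]
    congr 1
    omega
  have hpow : (V.updateCol (Fin.last n) fun i => x i ^ (n + 1)).det =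
      (-1) ^ n * ((∏ k, x k) * V.det) := by
    rw [← Matrix.det_mul_column]
    have h := Matrix.det_permute' (finRotate (n + 1)) (Matrix.of fun i j => x i * V i j)
    rw [sign_finRotate, Nat.add_sub_cancel] at h
    push_cast at h
    rw [← h]
    congr 1
    ext i j
    simp only [Matrix.submatrix_apply, Matrix.of_apply, id, V, ← pow_succ']
    refine Fin.lastCases ?_ (fun j => ?_) j
    · simp
    · rw [Matrix.updateCol_ne (Fin.castSucc_lt_last j).ne, Matrix.of_apply]
      congr 1
      have : ((finRotate (n + 1) j.castSucc : Fin (n + 1)) : ℕ) = j + 1 :=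
        coe_finRotate_of_ne_last (Fin.castSucc_lt_last j).ne
      simp only [this, Fin.val_castSucc]
      omega
  rw [← hexpand, hV]
  have hcol : (fun r => ∏ k, (1 - x r * x k)) =
      V.mulVec c + ((-1) ^ (n + 1) * ∏ k, x k) • fun i => x i ^ (n + 1) := by
    ext r
    rw [hprod]
    simp [V, Matrix.mulVec, dotProduct, mul_comm]
  rw [hcol, Matrix.det_updateCol_add, Matrix.det_updateCol_smul, hpow]
  have hc' : (V.updateCol (Fin.last n) (V.mulVec c)).det = V.det := by
    rw [← Matrix.cramer_apply, Matrix.cramer_eq_adjugate_mulVec, Matrix.mulVec_mulVec,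
      Matrix.adjugate_mul, Matrix.smul_mulVec, Matrix.one_mulVec]
    simp [hc]
  rw [hc']
  have hs : (-1 : R) ^ n * (-1) ^ n = 1 := by rw [← mul_pow]; simp
  linear_combination (-(∏ k, x k) ^ 2 * V.det) * hs

theorem alternant_snoc (x : Fin (n + 1) → R) (l : Fin n → ℕ) (m : ℕ) :
    alternant x (Fin.snoc (fun j => l j + m) m : Fin (n + 1) → ℕ) =
      (∏ k, x k) ^ m * ∑ r : Fin (n + 1), (-1) ^ ((r : ℕ) + n) *
        ((∏ i, x (r.succAbove i)) * alternant (x ∘ r.succAbove) l) := by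
  have hfac : alternant x (Fin.snoc (fun j => l j + m) m : Fin (n + 1) → ℕ) =
      (∏ k, x k) ^ m * alternant x (Fin.snoc l 0 : Fin (n + 1) → ℕ) := by
    rw [alternant, alternant, ← prod_pow, ← Matrix.det_mul_column]
    congr 1
    ext i j
    simp only [Matrix.of_apply, ← pow_add]
    congr 1
    refine Fin.lastCases ?_ (fun j => ?_) j
    · simp
    · simp; omega
  rw [hfac, alternant, Matrix.det_succ_column _ (Fin.last n)]
  congr 1
  refine sum_congr rfl fun r _ => ?_
  rw [alternant, ← Matrix.det_mul_column]
  simp only [Fin.val_last, Matrix.of_apply, Fin.snoc_last, add_tsub_cancel_right, tsub_self,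
    add_zero, pow_zero, mul_one]
  congr 2
  ext i j
  simp only [Matrix.submatrix_apply, Fin.succAbove_last, Matrix.of_apply, Function.comp_apply,
    Fin.snoc_castSucc, ← pow_succ', Fin.val_castSucc]
  congr 1
  omega

end Alternant

/-- Partitions with at most `n` parts, all of them even. -/
abbrev EvenPartition (n : ℕ) : Type :=
  {l : Fin n → ℕ // (∀ i j : Fin n, i ≤ j → l j ≤ l i) ∧ ∀ j : Fin n, Even (l j)}

/-- An even partition with at most `n + 1` parts is determined by half of its last part and the
differences of the other parts with the last one. -/
def evenPartitionSuccEquiv (n : ℕ) : ℕ × EvenPartition n ≃ EvenPartition (n + 1) where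
  toFun p := ⟨Fin.snoc (fun j => p.2.1 j + 2 * p.1) (2 * p.1), by
    obtain ⟨m, l, hl, he⟩ := p
    refine ⟨fun i j => ?_, fun j => ?_⟩
    · refine Fin.lastCases ?_ (fun j => ?_) j <;> refine Fin.lastCases ?_ (fun i => ?_) i
      · simp
      · simp
      · intro h
        exact absurd h (Fin.castSucc_lt_last j).not_ge
      · intro h
        simpa using hl i j (by simpa using h)
    · refine Fin.lastCases ?_ (fun j => ?_) j
      · simp
      · simpa using (he j).add (even_two_mul m)⟩
  invFun l := (l.1 (Fin.last n) / 2, ⟨fun j => l.1 j.castSucc - l.1 (Fin.last n),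
    fun i j h => Nat.sub_le_sub_right (l.2.1 _ _ (by simpa using h)) _,
    fun j => (l.2.2 _).tsub (l.2.2 _)⟩)
  left_inv p := by
    obtain ⟨m, l, hl, he⟩ := p
    simp
  right_inv l := by
    obtain ⟨l, hl, he⟩ := l
    have h2 : 2 * (l (Fin.last n) / 2) = l (Fin.last n) := Nat.two_mul_div_two_of_even (he _)
    apply Subtype.ext
    funext j
    refine Fin.lastCases ?_ (fun j => ?_) j
    · simpa using h2
    · simpa [h2] using Nat.sub_add_cancel (hl _ _ (Fin.le_last _))

/-- **Littlewood's formula** in a nonarchimedean ring, for variables in an ideal all of whose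
elements have a convergent geometric series. -/
theorem hasSum_alternant_mul_littlewoodDenom {R : Type*} [CommRing R] [TopologicalSpace R]
    [NonarchimedeanRing R] [T2Space R] (I : Ideal R) (hI : ∀ y ∈ I, Summable fun m : ℕ => y ^ m)
    {n : ℕ} (x : Fin n → R) (hx : ∀ i, x i ∈ I) :
    HasSum (fun l : EvenPartition n => alternant x l.1 * littlewoodDenom x) (alternant x 0) := by
  let _ : UniformSpace R := IsTopologicalAddGroup.rightUniformSpace R
  have : IsUniformAddGroup R := isUniformAddGroup_of_addCommGroup
  induction n with
  | zero =>
    let l₀ : EvenPartition 0 := ⟨0, fun i => i.elim0, fun i => i.elim0⟩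
    have h := hasSum_single (f := fun l : EvenPartition 0 => alternant x l.1 * littlewoodDenom x)
      l₀ fun l hl => absurd (Subtype.ext (Subsingleton.elim _ _)) hl
    simpa [l₀, alternant, littlewoodDenom] using h
  | succ n ih =>
    set e := ∏ k, x k with he
    have heI : e ^ 2 ∈ I := by
      refine I.pow_mem_of_mem (I.mem_of_dvd ?_ (hx 0)) 2 two_pos
      exact dvd_prod_of_mem x (mem_univ 0)
    have hgeom := (hI _ heI).hasSum
    have hone := (hI _ heI).tsum_pow_mul_one_sub
    have hcofactor : HasSum (fun l : EvenPartition n =>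
        (∑ r : Fin (n + 1), (-1) ^ ((r : ℕ) + n) *
          ((∏ i, x (r.succAbove i)) * alternant (x ∘ r.succAbove) l.1)) * littlewoodDenom x)
        ((1 - e ^ 2) * alternant x 0) := by
      rw [he, ← sum_prod_mul_alternant_zero_succAbove]
      simp only [sum_mul]
      refine hasSum_sum fun r _ => ?_
      have h := (ih (x ∘ r.succAbove) fun i => hx _).mul_left
        ((-1) ^ ((r : ℕ) + n) * (∏ k, (1 - x r * x k)) * ∏ i, x (r.succAbove i))
      rw [← mul_assoc]
      refine h.congr_fun ?_
      intro l
      rw [littlewoodDenom_eq_succAbove x r]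
      ring
    have h := hgeom.mul_of_nonarchimedean hcofactor
    rw [← mul_assoc, hone, one_mul] at h
    rw [← (evenPartitionSuccEquiv n).hasSum_iff]
    refine h.congr_fun fun p => ?_
    simp only [Function.comp_apply, evenPartitionSuccEquiv, Equiv.coe_fn_mk, alternant_snoc]
    rw [pow_mul, mul_assoc]

open scoped MvPowerSeries.WithPiTopology in
theorem MvPowerSeries.WithPiTopology.nonarchimedeanRing {σ A : Type*} [CommRing A]
    [TopologicalSpace A] [IsTopologicalRing A] [IsLinearTopology A A] :
    NonarchimedeanRing (MvPowerSeries σ A) where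
  is_nonarchimedean U hU := by
    obtain ⟨J, hJ, hJU⟩ :=
      (IsLinearTopology.hasBasis_open_ideal (R := MvPowerSeries σ A)).mem_iff.mp hU
    exact ⟨⟨J.toAddSubgroup, hJ⟩, hJU⟩

/-- **Littlewood's formula** `∑_{λ even} s_λ = ∏ 1/(1-x_i²) ∏_{i<j} 1/(1-x_i x_j)` with
denominators cleared, as a convergent sum in `ℚ[[x_1,…,x_n]]` (with the product topology
coming from the discrete topology on the coefficients).  Partitions with at most `n`
parts, all even, are encoded as antitone functions `Fin n → ℕ` with even values; with
0-indexed `j`, the exponent `λ_j + n - j` becomes `l j + (n - 1 - j)`. -/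
theorem littlewood_sum_even_partitions (n : ℕ) (hn : 0 < n) :
    letI : TopologicalSpace ℚ := ⊥
    letI : TopologicalSpace (MvPowerSeries (Fin n) ℚ) :=
      inferInstanceAs (TopologicalSpace ((Fin n →₀ ℕ) → ℚ))
    HasSum
      (fun l : {l : Fin n → ℕ //
          (∀ i j : Fin n, i ≤ j → l j ≤ l i) ∧ ∀ j : Fin n, Even (l j)} =>
        Matrix.det (Matrix.of fun i j : Fin n =>
            (MvPowerSeries.X i : MvPowerSeries (Fin n) ℚ) ^ (l.1 j + (n - 1 - (j : ℕ)))) *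
          (∏ i : Fin n, (1 - MvPowerSeries.X i ^ 2)) *
          ∏ i : Fin n, ∏ j ∈ Finset.Ioi i,
            (1 - MvPowerSeries.X i * MvPowerSeries.X j))
      (∏ i : Fin n, ∏ j ∈ Finset.Ioi i,
        (MvPowerSeries.X i - MvPowerSeries.X j)) := by
  let _ : TopologicalSpace ℚ := ⊥
  have : DiscreteTopology ℚ := ⟨rfl⟩
  let _ : TopologicalSpace (MvPowerSeries (Fin n) ℚ) :=
    MvPowerSeries.WithPiTopology.instTopologicalSpace ℚ
  have : NonarchimedeanRing (MvPowerSeries (Fin n) ℚ) :=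
    MvPowerSeries.WithPiTopology.nonarchimedeanRing
  have : T2Space (MvPowerSeries (Fin n) ℚ) := MvPowerSeries.WithPiTopology.instT2Space
  have h := hasSum_alternant_mul_littlewoodDenom
    (RingHom.ker (MvPowerSeries.constantCoeff (σ := Fin n) (R := ℚ)))
    (fun y hy => MvPowerSeries.WithPiTopology.summable_pow_of_constantCoeff_eq_zero hy)
    (MvPowerSeries.X : Fin n → MvPowerSeries (Fin n) ℚ) (fun i => by simp [RingHom.mem_ker])
  rw [alternant_zero] at h
  simp only [alternant, littlewoodDenom] at h
  simp only [mul_assoc]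
  exact h
end
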